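/- arXiv:math/0403034 — 9 statements merged into one kernel-verified Lean document; each statement's English description precedes it below -/
import Mathlib

section
/- Let Ω ⊆ ℂ be an open set, let x₀, x₁ ∈ Ω, and let f be a holomorphic function on an open disk D₀ ⊆ Ω centered at x₀. Then the set of germs of holomorphic functions at x₁ that are obtained from f by analytic continuation along a chain of disks in Ω is countable. -/
open Filter Metric Set

/-- A germ `g` of holomorphic function at `x₁` is obtained from the holomorphic function `f`
(given on the open disk `D₀ ⊆ Ω`) by analytic continuation along a chain of open disks
contained in `Ω`. -/
def ContinuationGerm (Ω : Set ℂ) (f : ℂ → ℂ) (D₀ : Set ℂ) (x₁ : ℂ)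
    (g : Filter.Germ (nhds x₁) ℂ) : Prop :=
  ∃ (n : ℕ) (D : Fin (n + 1) → Set ℂ) (F : Fin (n + 1) → ℂ → ℂ),
    D 0 = D₀ ∧ Set.EqOn (F 0) f D₀ ∧
    (∀ k, (∃ c : ℂ, ∃ r : ℝ, 0 < r ∧ D k = Metric.ball c r) ∧ D k ⊆ Ω ∧
      DifferentiableOn ℂ (F k) (D k)) ∧
    (∀ k : Fin n, (D k.castSucc ∩ D k.succ).Nonempty ∧
      Set.EqOn (F k.castSucc) (F k.succ) (D k.castSucc ∩ D k.succ)) ∧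
    x₁ ∈ D (Fin.last n) ∧ g = ↑(F (Fin.last n))

/-- Chain data together with overlap points taken from a fixed dense sequence. -/
def CodedGerm (f : ℂ → ℂ) (D₀ : Set ℂ) (x₁ : ℂ) (c : Σ n : ℕ, Fin n → ℕ)
    (g : Filter.Germ (nhds x₁) ℂ) : Prop :=
  ∃ (D : Fin (c.1 + 1) → Set ℂ) (F : Fin (c.1 + 1) → ℂ → ℂ),
    D 0 = D₀ ∧ Set.EqOn (F 0) f D₀ ∧
    (∀ k, IsOpen (D k) ∧ Convex ℝ (D k) ∧ DifferentiableOn ℂ (F k) (D k)) ∧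
    (∀ k : Fin c.1, TopologicalSpace.denseSeq ℂ (c.2 k) ∈ D k.castSucc ∩ D k.succ ∧
      Set.EqOn (F k.castSucc) (F k.succ) (D k.castSucc ∩ D k.succ)) ∧
    x₁ ∈ D (Fin.last c.1) ∧ g = ↑(F (Fin.last c.1))

/-- The germ is determined by the sequence of overlap points. -/
theorem codedGerm_unique (f : ℂ → ℂ) (D₀ : Set ℂ) (x₁ : ℂ) (c : Σ n : ℕ, Fin n → ℕ)
    (g g' : Filter.Germ (nhds x₁) ℂ) (h : CodedGerm f D₀ x₁ c g)
    (h' : CodedGerm f D₀ x₁ c g') : g = g' := by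
  obtain ⟨D, F, hD, hF, hA, hC, hx, rfl⟩ := h
  obtain ⟨D', F', hD', hF', hA', hC', hx', rfl⟩ := h'
  have key : ∀ k, Set.EqOn (F k) (F' k) (D k ∩ D' k) := by
    intro k
    induction k using Fin.induction with
    | zero =>
      intro z hz
      rw [hD, hD'] at hz
      rw [hF hz.1, hF' hz.1]
    | succ k ih =>
      obtain ⟨ho, hc, hd⟩ := hA k.succ
      obtain ⟨ho', hc', hd'⟩ := hA' k.succ
      have hop := ho.inter ho'
      obtain ⟨hp, he⟩ := hC k
      obtain ⟨hp', he'⟩ := hC' k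
      refine AnalyticOnNhd.eqOn_of_preconnected_of_eventuallyEq
        ((hd.mono inter_subset_left).analyticOnNhd hop)
        ((hd'.mono inter_subset_right).analyticOnNhd hop)
        (hc.inter hc').isPreconnected ⟨hp.2, hp'.2⟩ ?_
      filter_upwards [((hA k.castSucc).1.inter ho).mem_nhds hp,
        ((hA' k.castSucc).1.inter ho').mem_nhds hp'] with z hz hz'
      rw [← he hz, ← he' hz', ih ⟨hz.1, hz'.1⟩]
  refine Filter.Germ.coe_eq.2 ?_
  filter_upwards [((hA _).1.inter (hA' _).1).mem_nhds ⟨hx, hx'⟩] with z hz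
  exact key _ hz

/-- **Poincaré–Volterra lemma**: the set of germs at `x₁` obtained from `f` by analytic
continuation along chains of disks in `Ω` is countable. -/
theorem poincare_volterra (Ω : Set ℂ) (hΩ : IsOpen Ω) (x₀ x₁ : ℂ)
    (hx₀ : x₀ ∈ Ω) (hx₁ : x₁ ∈ Ω) (r : ℝ) (hr : 0 < r)
    (hD₀ : Metric.ball x₀ r ⊆ Ω) (f : ℂ → ℂ)
    (hf : DifferentiableOn ℂ f (Metric.ball x₀ r)) :
    {g : Filter.Germ (nhds x₁) ℂ |
      ContinuationGerm Ω f (Metric.ball x₀ r) x₁ g}.Countable := by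
  have hsub : {g : Filter.Germ (nhds x₁) ℂ |
      ContinuationGerm Ω f (Metric.ball x₀ r) x₁ g} ⊆
      ⋃ c : (Σ n : ℕ, Fin n → ℕ), {g | CodedGerm f (Metric.ball x₀ r) x₁ c g} := by
    rintro g ⟨n, D, F, hD, hF, hA, hC, hx, hg⟩
    have hA' : ∀ k, IsOpen (D k) ∧ Convex ℝ (D k) ∧ DifferentiableOn ℂ (F k) (D k) := by
      intro k
      obtain ⟨⟨c, ρ, -, hb⟩, -, hd⟩ := hA k
      refine ⟨?_, ?_, hd⟩
      · rw [hb]; exact Metric.isOpen_ball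
      · rw [hb]; exact convex_ball c ρ
    have hm : ∀ k : Fin n, ∃ m : ℕ,
        TopologicalSpace.denseSeq ℂ m ∈ D k.castSucc ∩ D k.succ := fun k =>
      (TopologicalSpace.denseRange_denseSeq ℂ).exists_mem_open
        ((hA' k.castSucc).1.inter (hA' k.succ).1) (hC k).1
    choose m hm using hm
    exact mem_iUnion.2 ⟨⟨n, m⟩, D, F, hD, hF, hA', fun k => ⟨hm k, (hC k).2⟩, hx, hg⟩
  refine Set.Countable.mono hsub (Set.countable_iUnion fun c => ?_)
  exact Set.Subsingleton.countable fun g hg g' hg' => codedGerm_unique _ _ _ c g g' hg hg'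
end

section
/- Let P, Q be nonzero polynomials in two variables over ℂ having no common non-unit factor (every common divisor of P and Q is a unit). Then the set {(x,y) ∈ ℂ² : P(x,y) = 0 and Q(x,y) = 0} of their common zeros is finite. -/
/-- Evaluation of a bivariate polynomial `P ∈ ℂ[X][Y]` at a point `(x, y) ∈ ℂ²`:
`(x, y) ↦ Σ_j p_j(x) y^j` where the `p_j ∈ ℂ[X]` are the coefficients of `P`
as a polynomial in `Y`. -/
noncomputable def evalXY (P : Polynomial (Polynomial ℂ)) (x y : ℂ) : ℂ :=
  (P.map (Polynomial.evalRingHom x)).eval y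

open Polynomial in
lemma exists_elim {R : Type*} [CommRing R] [IsDomain R] [UniqueFactorizationMonoid R]
    (P Q : R[X]) (hP : P ≠ 0) (h : IsRelPrime P Q) :
    ∃ a b : R[X], ∃ r : R, r ≠ 0 ∧ P * a + Q * b = C r := by
  classical
  by_cases hd : P.natDegree ≠ 0 ∨ Q.natDegree ≠ 0
  · obtain ⟨a, b, -, -, hab⟩ := exists_mul_add_mul_eq_C_resultant P Q le_rfl le_rfl hd
    refine ⟨a, b, _, ?_, hab⟩
    intro h0
    let K := FractionRing R
    have hinj : Function.Injective (algebraMap R K) := IsFractionRing.injective R K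
    have h1 := resultant_map_map P Q P.natDegree Q.natDegree (algebraMap R K)
    rw [h0, map_zero] at h1
    have h2 : resultant (P.map (algebraMap R K)) (Q.map (algebraMap R K)) = 0 := by
      rw [natDegree_map_eq_of_injective hinj, natDegree_map_eq_of_injective hinj]
      exact h1
    refine (resultant_eq_zero_iff.mp h2).2 ?_
    rw [← isRelPrime_iff_isCoprime]
    intro D hDP hDQ
    let : StrongNormalizationMonoid R := UniqueFactorizationMonoid.strongNormalizationMonoid
    let : NormalizedGCDMonoid R := UniqueFactorizationMonoid.toNormalizedGCDMonoid R
    have hD0 : D ≠ 0 := by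
      rintro rfl
      exact hP ((Polynomial.map_eq_zero_iff hinj).mp (zero_dvd_iff.mp hDP))
    set N := IsLocalization.integerNormalization (nonZeroDivisors R) D with hN
    have hND : N.map (algebraMap R K) ∣ D := by
      obtain ⟨c, c0, hc⟩ := IsLocalization.integerNormalization_spec (nonZeroDivisors R) D
      rw [Algebra.smul_def, Polynomial.algebraMap_apply] at hc
      rw [hN, hc]
      have : IsUnit (C (algebraMap R K c)) := by
        rw [isUnit_C, isUnit_iff_ne_zero]
        intro hz
        exact nonZeroDivisors.ne_zero c0 (hinj (by simpa using hz))
      exact (this.mul_left_dvd).mpr dvd_rfl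
    have hpD : N.primPart.map (algebraMap R K) ∣ D :=
      (Polynomial.map_dvd _ N.primPart_dvd).trans hND
    have hprim := N.isPrimitive_primPart
    exact isUnit_or_eq_zero_of_isUnit_integerNormalization_primPart hD0
      (h (hprim.dvd_of_fraction_map_dvd_fraction_map (hpD.trans hDP))
        (hprim.dvd_of_fraction_map_dvd_fraction_map (hpD.trans hDQ)))
  · push Not at hd
    obtain ⟨p, rfl⟩ := natDegree_eq_zero.mp hd.1
    exact ⟨1, 0, p, by simpa using hP, by simp⟩

/-- If `P, Q ∈ ℂ[X,Y]` are nonzero and have no common non-unit factor, then their set of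
common zeros in `ℂ²` is finite. -/
theorem common_zeros_finite (P Q : Polynomial (Polynomial ℂ))
    (hP : P ≠ 0) (hQ : Q ≠ 0) (h : IsRelPrime P Q) :
    {p : ℂ × ℂ | evalXY P p.1 p.2 = 0 ∧ evalXY Q p.1 p.2 = 0}.Finite := by
  obtain ⟨a, b, r, hr, hab⟩ := exists_elim P Q hP h
  have key : ∀ x y, evalXY P x y = 0 → evalXY Q x y = 0 → r.eval x = 0 := by
    intro x y h1 h2
    have := congrArg (fun F => (F.map (Polynomial.evalRingHom x)).eval y) hab
    unfold evalXY at h1 h2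
    simpa [h1, h2] using this.symm
  have hdvd : ∀ (x : ℂ) (F : Polynomial (Polynomial ℂ)),
      F.map (Polynomial.evalRingHom x) = 0 →
        Polynomial.C (Polynomial.X - Polynomial.C x) ∣ F := by
    intro x F hF
    rw [Polynomial.C_dvd_iff_dvd_coeff]
    intro i
    rw [Polynomial.dvd_iff_isRoot]
    have := congrArg (fun G => Polynomial.coeff G i) hF
    simpa using this
  have hfib : ∀ x : ℂ, {y : ℂ | evalXY P x y = 0 ∧ evalXY Q x y = 0}.Finite := by
    intro x
    by_cases h1 : P.map (Polynomial.evalRingHom x) = 0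
    · by_cases h2 : Q.map (Polynomial.evalRingHom x) = 0
      · exfalso
        have hu := h (hdvd x P h1) (hdvd x Q h2)
        rw [Polynomial.isUnit_C] at hu
        exact Polynomial.not_isUnit_X_sub_C x hu
      · exact (Polynomial.finite_setOfPred_isRoot h2).subset fun y hy => hy.2
    · exact (Polynomial.finite_setOfPred_isRoot h1).subset fun y hy => hy.1
  refine ((Polynomial.finite_setOfPred_isRoot hr).biUnion
    fun x _ => (hfib x).image (Prod.mk x)).subset ?_
  rintro ⟨x, y⟩ ⟨h1, h2⟩
  simp only [Set.mem_iUnion]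
  exact ⟨x, key x y h1 h2, y, ⟨h1, h2⟩, rfl⟩
end

section
/- Let P, Q ∈ ℂ[X][Y] be nonzero polynomials with no common non-unit factor, let p_j, q_j ∈ ℂ[X] be their coefficients as polynomials in Y, let m = deg_Y P, n = deg_Y Q, and K = max(n, m−2). Define P̃ := Σ_{j=0}^{m} p_j(X) Y^{K+2−j} and Q̃ := Σ_{j=0}^{n} q_j(X) Y^{K−j} in ℂ[X][Y]. Then P̃ and Q̃ have no common non-unit factor. -/
open Polynomial in
theorem sum_eq_reflect_aux (P : Polynomial (Polynomial ℂ)) (N : ℕ) (hN : P.natDegree ≤ N) :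
    (∑ j ∈ Finset.range (P.natDegree + 1),
      C (P.coeff j) * (X : Polynomial (Polynomial ℂ)) ^ (N - j)) = reflect N P := by
  have h1 : reflect N P = reflect N (∑ j ∈ Finset.range (P.natDegree + 1),
      C (P.coeff j) * X ^ j) := by rw [← P.as_sum_range_C_mul_X_pow]
  have h2 : ∀ s : Finset ℕ, reflect N (∑ j ∈ s, C (P.coeff j) * X ^ j)
      = ∑ j ∈ s, reflect N (C (P.coeff j) * X ^ j) := by
    intro s
    induction s using Finset.induction_on with
    | empty => simp
    | insert a s ha ih => rw [Finset.sum_insert ha, Finset.sum_insert ha, reflect_add, ih]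
  rw [h1, h2]
  refine Finset.sum_congr rfl fun j hj => ?_
  rw [reflect_C_mul_X_pow, revAt_le]
  have := Finset.mem_range.1 hj
  omega

open Polynomial in
theorem reverse_dvd_aux (P d : Polynomial (Polynomial ℂ)) (hP : P ≠ 0) (N : ℕ)
    (hN : P.natDegree ≤ N) (hd : d ∣ reflect N P) : reverse d ∣ P := by
  obtain ⟨e, he⟩ := hd
  have hne : reflect N P ≠ 0 := by
    rwa [Ne, reflect_eq_zero_iff]
  have hdeg : (reflect N P).natDegree ≤ N := by
    rw [natDegree_le_iff_coeff_eq_zero]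
    intro k hk
    rw [coeff_reflect, revAt_eq_self_of_lt hk]
    exact coeff_eq_zero_of_natDegree_lt (by omega)
  have hd0 : d ≠ 0 := by rintro rfl; simp [he] at hne
  have he0 : e ≠ 0 := by rintro rfl; simp [he] at hne
  rw [he, natDegree_mul hd0 he0] at hdeg
  have h1 : P = reflect N (d * e) := by
    rw [← he]
    ext1 k
    simp [coeff_reflect]
  have h2 := reflect_mul d e (F := d.natDegree) (G := N - d.natDegree) le_rfl (by omega)
  rw [show d.natDegree + (N - d.natDegree) = N by omega] at h2
  rw [h1, h2]
  exact Dvd.intro _ rfl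

open Polynomial in
/-- After the change of variable `Y = 1/y`, the differential equation
`dy/dx = P(x,y)/Q(x,y)` becomes `dY/dx = P̃(x,Y)/Q̃(x,Y)` with
`P̃ = Σ_{j=0}^{m} p_j(X) Y^{K+2−j}` and `Q̃ = Σ_{j=0}^{n} q_j(X) Y^{K−j}`, where
`m = deg_Y P`, `n = deg_Y Q`, `K = max(n, m−2)`.  If `P` and `Q` are nonzero with no
common non-unit factor, then `P̃` and `Q̃` have no common non-unit factor. -/
theorem transformed_pair_coprime (P Q : Polynomial (Polynomial ℂ))
    (hP : P ≠ 0) (hQ : Q ≠ 0) (h : IsRelPrime P Q) :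
    IsRelPrime
      (∑ j ∈ Finset.range (P.natDegree + 1),
        C (P.coeff j) * (X : Polynomial (Polynomial ℂ)) ^
          (max Q.natDegree (P.natDegree - 2) + 2 - j))
      (∑ j ∈ Finset.range (Q.natDegree + 1),
        C (Q.coeff j) * (X : Polynomial (Polynomial ℂ)) ^
          (max Q.natDegree (P.natDegree - 2) - j)) := by
  set K := max Q.natDegree (P.natDegree - 2) with hK
  have hPK : P.natDegree ≤ K + 2 := by omega
  have hQK : Q.natDegree ≤ K := by omega
  rw [sum_eq_reflect_aux P _ hPK, sum_eq_reflect_aux Q _ hQK]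
  intro d hdP hdQ
  have hu : IsUnit (reverse d) :=
    h (reverse_dvd_aux P d hP _ hPK hdP) (reverse_dvd_aux Q d hQ _ hQK hdQ)
  have hd0 : d.coeff 0 ≠ 0 := by
    intro h0
    have key : ∀ (R : Polynomial (Polynomial ℂ)) (N : ℕ), d ∣ reflect N R → R.coeff N = 0 := by
      rintro R N ⟨e, he⟩
      have := congrArg (fun p => coeff p 0) he
      simpa [coeff_reflect, mul_coeff_zero, h0, revAt_le] using this
    have k1 := key P _ hdP
    have k2 := key Q _ hdQ
    rcases (by omega : P.natDegree = K + 2 ∨ Q.natDegree = K) with e | e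
    · rw [← e] at k1
      exact hP (leadingCoeff_eq_zero.1 k1)
    · rw [← e] at k2
      exact hQ (leadingCoeff_eq_zero.1 k2)
  have hdeg : d.natDegree = 0 := by
    by_contra hne
    have h1 := natDegree_eq_zero_of_isUnit hu
    have h2 : (reverse d).coeff d.natDegree = 0 :=
      coeff_eq_zero_of_natDegree_lt (by omega)
    rw [coeff_reverse, revAt_le le_rfl, Nat.sub_self] at h2
    exact hd0 h2
  obtain ⟨c, rfl⟩ : ∃ c, d = C c := ⟨_, eq_C_of_natDegree_eq_zero hdeg⟩
  simpa using hu
end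

section
/- Let P, Q ∈ ℂ[X][Y] be nonzero polynomials with no common non-unit factor, with coefficients p_j, q_j ∈ ℂ[X] as polynomials in Y (q_j := 0 for j > deg_Y Q), let m = deg_Y P, n = deg_Y Q, and K = max(n, m−2). Suppose there exists x₀ ∈ ℂ such that: (i) Q(x₀, y) ≠ 0 for every y ∈ ℂ, and (ii) q_K(x₀) ≠ 0. Then n = 0 and m ≤ 2; that is, Q depends only on x and P has degree at most 2 in y, so the equation dy/dx = P(x,y)/Q(x,y) is a Riccati equation dy/dx = (a(x)y² + b(x)y + c(x))/Q(x) with a, b, c, Q ∈ ℂ[X]. -/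
/-- **Riccati criterion (algebraic core of Painlevé's proposition).**
Let `P, Q ∈ ℂ[X][Y]` be nonzero coprime polynomials, `m = deg_Y P`, `n = deg_Y Q`,
`K = max(n, m−2)`.  If there is a point `x₀ ∈ ℂ` such that (i) `Q(x₀, y) ≠ 0` for all
`y ∈ ℂ` and (ii) `q_K(x₀) ≠ 0`, then `n = 0` and `m ≤ 2`: the equation
`dy/dx = P(x,y)/Q(x,y)` is a Riccati equation. -/
theorem riccati_criterion (P Q : Polynomial (Polynomial ℂ))
    (hP : P ≠ 0) (hQ : Q ≠ 0) (h : IsRelPrime P Q) (x₀ : ℂ)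
    (h₁ : ∀ y : ℂ, evalXY Q x₀ y ≠ 0)
    (h₂ : (Q.coeff (max Q.natDegree (P.natDegree - 2))).eval x₀ ≠ 0) :
    Q.natDegree = 0 ∧ P.natDegree ≤ 2 := by
  have hK : max Q.natDegree (P.natDegree - 2) ≤ Q.natDegree := by
    apply Polynomial.le_natDegree_of_ne_zero
    intro h0
    rw [h0] at h₂
    simp at h₂
  have hmn : P.natDegree - 2 ≤ Q.natDegree := le_trans (le_max_right _ _) hK
  rw [max_eq_left hmn] at h₂
  have hdeg : (Q.map (Polynomial.evalRingHom x₀)).natDegree = Q.natDegree := by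
    apply Polynomial.natDegree_map_of_leadingCoeff_ne_zero
    simpa using h₂
  have hn : Q.natDegree = 0 := by
    by_contra hne
    have hd : (Q.map (Polynomial.evalRingHom x₀)).degree ≠ 0 := by
      intro h0
      exact hne (hdeg ▸ Polynomial.natDegree_eq_of_degree_eq_some h0)
    obtain ⟨y, hy⟩ := IsAlgClosed.exists_root _ hd
    exact h₁ y hy
  exact ⟨hn, by omega⟩
end

section
/- Let k ≥ 2 be an integer and let H be a holomorphic function on an open neighborhood of (0,0) ∈ ℂ² with H(0,0) = 0. Assume: (i) there is a function u, holomorphic near (0,0) with u(0,0) ≠ 0, such that ∂H/∂y (x,y) = y^{k−1} u(x,y) for all (x,y) near (0,0); and (ii) the function x ↦ H(x,0) has nonzero derivative at x = 0. Then there exist a function v, holomorphic on a neighborhood of (0,0) ∈ ℂ² with v(0,0) ≠ 0, and a function ψ, holomorphic on a neighborhood of 0 ∈ ℂ with ψ(0) = 0 and ψ′(0) ≠ 0, such that H(x,y) = ψ( x + (y · v(x,y))^k ) for all (x,y) in a neighborhood of (0,0). -/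
open Filter

/-- The dilation `(x, y) ↦ (x, t y)`. -/
noncomputable def pnfDil (t : ℝ) : ℂ × ℂ →L[ℂ] ℂ × ℂ :=
  (ContinuousLinearMap.fst ℂ ℂ ℂ).prod ((t : ℂ) • ContinuousLinearMap.snd ℂ ℂ ℂ)

lemma pnfDil_apply (t : ℝ) (p : ℂ × ℂ) : pnfDil t p = (p.1, (t : ℂ) * p.2) := by
  simp [pnfDil]

lemma pnfDil_norm_apply {t : ℝ} (h0 : 0 ≤ t) (h1 : t ≤ 1) (p : ℂ × ℂ) :
    ‖pnfDil t p‖ ≤ ‖p‖ := by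
  rw [pnfDil_apply, Prod.norm_def, Prod.norm_def]
  refine max_le_max le_rfl ?_
  simp only [norm_mul, Complex.norm_real, Real.norm_eq_abs, abs_of_nonneg h0]
  exact mul_le_of_le_one_left (norm_nonneg _) h1

lemma pnfDil_norm {t : ℝ} (h0 : 0 ≤ t) (h1 : t ≤ 1) : ‖pnfDil t‖ ≤ 1 :=
  ContinuousLinearMap.opNorm_le_bound _ zero_le_one fun p => by
    simpa using pnfDil_norm_apply h0 h1 p

lemma pnfDil_continuous : Continuous pnfDil := by
  have : pnfDil = fun t : ℝ => (ContinuousLinearMap.inl ℂ ℂ ℂ).comp (ContinuousLinearMap.fst ℂ ℂ ℂ)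
      + (t : ℂ) • (ContinuousLinearMap.inr ℂ ℂ ℂ).comp (ContinuousLinearMap.snd ℂ ℂ ℂ) := by
    funext t
    refine ContinuousLinearMap.ext fun p => ?_
    rw [pnfDil_apply]
    ext <;> simp
  rw [this]
  fun_prop

/-- Analyticity of a parametric integral. -/
lemma pnf_analyticAt_integral (m : ℕ) (U : ℂ × ℂ → ℂ) (hU : AnalyticAt ℂ U (0, 0)) :
    AnalyticAt ℂ (fun p : ℂ × ℂ => ∫ t in (0 : ℝ)..1, (t : ℂ) ^ m * U (pnfDil t p)) (0, 0) := by
  obtain ⟨P, r, hP⟩ := hU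
  let K : (n : ℕ) → ℝ → (ℂ × ℂ) [×n]→L[ℂ] ℂ := fun n t =>
    (t : ℂ) ^ m • (P n).compContinuousLinearMap (fun _ => pnfDil t)
  have hKc : ∀ n, Continuous (K n) := by
    intro n
    have h1 : Continuous fun t : ℝ =>
        (P n).compContinuousLinearMap (fun _ : Fin n => pnfDil t) := by
      have := (ContinuousMultilinearMap.compContinuousLinearMapLRight (𝕜 := ℂ)
        (E := fun _ : Fin n => ℂ × ℂ) (P n)).cont.comp
        (continuous_pi fun _ : Fin n => pnfDil_continuous)
      exact this
    exact (Complex.continuous_ofReal.pow m).smul h1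
  have hKb : ∀ n t, 0 ≤ t → t ≤ 1 → ‖K n t‖ ≤ ‖P n‖ := by
    intro n t h0 h1
    have ht : ‖(t : ℂ) ^ m‖ ≤ 1 := by
      rw [norm_pow, Complex.norm_real, Real.norm_eq_abs, abs_of_nonneg h0]
      exact pow_le_one₀ h0 h1
    have h2 : ‖(P n).compContinuousLinearMap (fun _ : Fin n => pnfDil t)‖ ≤ ‖P n‖ := by
      refine (ContinuousMultilinearMap.norm_compContinuousLinearMap_le _ _).trans ?_
      refine mul_le_of_le_one_right (norm_nonneg _) ?_
      exact Finset.prod_le_one (fun _ _ => norm_nonneg _) fun _ _ => pnfDil_norm h0 h1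
    calc ‖K n t‖ = ‖(t : ℂ) ^ m‖ * _ := norm_smul _ _
      _ ≤ 1 * ‖P n‖ := mul_le_mul ht h2 (norm_nonneg _) zero_le_one
      _ = _ := one_mul _
  let Q : FormalMultilinearSeries ℂ (ℂ × ℂ) ℂ := fun n => ∫ t in (0 : ℝ)..1, K n t
  have hQ : ∀ n, ‖Q n‖ ≤ ‖P n‖ := by
    intro n
    have := intervalIntegral.norm_integral_le_of_norm_le_const (a := 0) (b := 1) (f := K n)
      (C := ‖P n‖) (fun t ht => by
        rw [Set.uIoc_of_le zero_le_one] at ht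
        exact hKb n t ht.1.le ht.2)
    simpa using this
  refine ⟨Q, r, ⟨hP.r_le.trans (FormalMultilinearSeries.radius_le_of_le hQ), hP.r_pos, ?_⟩⟩
  intro y hy
  have happ : ∀ n, Q n (fun _ => y) = ∫ t in (0 : ℝ)..1, K n t (fun _ => y) := by
    intro n
    exact ((ContinuousMultilinearMap.apply ℂ (fun _ : Fin n => ℂ × ℂ) ℂ
      (fun _ => y)).intervalIntegral_comp_comm ((hKc n).intervalIntegrable 0 1)).symm
  simp only [happ]
  have hsum : Summable fun n => ‖P n‖ * ‖y‖ ^ n := by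
    have : ((‖y‖₊ : NNReal) : ENNReal) < P.radius := by
      have := Metric.mem_eball.1 hy
      rw [edist_zero_right] at this
      exact lt_of_lt_of_le this hP.r_le
    simpa using P.summable_norm_mul_pow this
  refine intervalIntegral.hasSum_integral_of_dominated_convergence
    (fun n _ => ‖P n‖ * ‖y‖ ^ n) ?_ ?_ ?_ ?_ ?_
  · intro n
    exact ((ContinuousMultilinearMap.apply ℂ (fun _ : Fin n => ℂ × ℂ) ℂ
      (fun _ => y)).continuous.comp (hKc n)).aestronglyMeasurable
  · intro n
    refine Eventually.of_forall fun t ht => ?_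
    rw [Set.uIoc_of_le zero_le_one] at ht
    refine ((K n t).le_opNorm _).trans ?_
    simp only [Finset.prod_const, Finset.card_univ, Fintype.card_fin]
    gcongr
    exact hKb n t ht.1.le ht.2
  · exact Eventually.of_forall fun t ht => hsum
  · exact intervalIntegrable_const
  · refine Eventually.of_forall fun t ht => ?_
    rw [Set.uIoc_of_le zero_le_one] at ht
    have hy' : pnfDil t y ∈ Metric.eball (0 : ℂ × ℂ) r := by
      have := Metric.mem_eball.1 hy
      rw [edist_zero_right] at this
      rw [Metric.mem_eball, edist_zero_right]
      refine lt_of_le_of_lt ?_ this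
      exact enorm_le_iff_norm_le.2 (pnfDil_norm_apply ht.1.le ht.2 y)
    have := (hP.hasSum hy').mul_left ((t : ℂ) ^ m)
    have h00 : ((0 : ℂ), (0 : ℂ)) = 0 := rfl
    simp only [h00, zero_add] at this ⊢
    exact this

/-- Analytic `k`-th roots of a nonvanishing analytic function. -/
lemma pnf_root (k : ℕ) (hk : k ≠ 0) (w : ℂ × ℂ → ℂ) (hw : AnalyticAt ℂ w (0, 0))
    (hw0 : w (0, 0) ≠ 0) :
    ∃ v : ℂ × ℂ → ℂ, AnalyticAt ℂ v (0, 0) ∧ v (0, 0) ≠ 0 ∧ ∀ p, v p ^ k = w p := by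
  obtain ⟨c, hc⟩ := IsAlgClosed.exists_pow_nat_eq (w (0, 0)) (Nat.pos_of_ne_zero hk)
  have hc0 : c ≠ 0 := by
    rintro rfl
    rw [zero_pow hk] at hc
    exact hw0 hc.symm
  refine ⟨fun p => c * (w p / w (0, 0)) ^ ((k : ℂ)⁻¹), ?_, ?_, ?_⟩
  · refine analyticAt_const.mul ((hw.div analyticAt_const hw0).cpow analyticAt_const ?_)
    simp [hw0]
  · simp [hw0, hc0]
  · intro p
    rw [mul_pow, Complex.cpow_nat_inv_pow _ hk, hc]
    field_simp

/-- **Painlevé's local normal form lemma (simple tangency with the vertical fibration).**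
Let `k ≥ 2` and let `H` be holomorphic near `(0,0) ∈ ℂ²` with `H(0,0) = 0`.  Assume
`∂H/∂y (x,y) = y^{k−1} u(x,y)` near `(0,0)` with `u` holomorphic, `u(0,0) ≠ 0`, and that
`x ↦ H(x,0)` has nonzero derivative at `0`.  Then there are a holomorphic `v` near
`(0,0)` with `v(0,0) ≠ 0` and a holomorphic `ψ` near `0 ∈ ℂ` with `ψ(0) = 0`,
`ψ′(0) ≠ 0`, such that `H(x,y) = ψ(x + (y·v(x,y))^k)` near `(0,0)`. -/
theorem painleve_normal_form (k : ℕ) (hk : 2 ≤ k) (H u : ℂ × ℂ → ℂ)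
    (hH : ∀ᶠ p in nhds ((0 : ℂ), (0 : ℂ)), AnalyticAt ℂ H p)
    (hH0 : H (0, 0) = 0)
    (hu : ∀ᶠ p in nhds ((0 : ℂ), (0 : ℂ)), AnalyticAt ℂ u p)
    (hu0 : u (0, 0) ≠ 0)
    (hdy : ∀ᶠ p in nhds ((0 : ℂ), (0 : ℂ)),
      deriv (fun y : ℂ => H (p.1, y)) p.2 = p.2 ^ (k - 1) * u p)
    (hx : deriv (fun x : ℂ => H (x, 0)) 0 ≠ 0) :
    ∃ (v : ℂ × ℂ → ℂ) (ψ : ℂ → ℂ),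
      (∀ᶠ p in nhds ((0 : ℂ), (0 : ℂ)), AnalyticAt ℂ v p) ∧ v (0, 0) ≠ 0 ∧
      (∀ᶠ z in nhds (0 : ℂ), AnalyticAt ℂ ψ z) ∧ ψ 0 = 0 ∧ deriv ψ 0 ≠ 0 ∧
      ∀ᶠ p in nhds ((0 : ℂ), (0 : ℂ)), H p = ψ (p.1 + (p.2 * v p) ^ k) := by
  have hHa : AnalyticAt ℂ H (0, 0) := hH.self_of_nhds
  have hua : AnalyticAt ℂ u (0, 0) := hu.self_of_nhds
  set ψ : ℂ → ℂ := fun x => H (x, 0) with hψdef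
  have hψ0 : ψ 0 = 0 := hH0
  have hψ : AnalyticAt ℂ ψ 0 :=
    AnalyticAt.fun_comp (g := H) (f := fun x : ℂ => (x, (0 : ℂ))) hHa
      (analyticAt_id.prod analyticAt_const)
  obtain ⟨φ, hφ, hφl, hφr, hφd⟩ : ∃ φ : ℂ → ℂ, AnalyticAt ℂ φ 0 ∧
      (∀ᶠ x in nhds (0 : ℂ), φ (ψ x) = x) ∧ (∀ᶠ z in nhds (0 : ℂ), ψ (φ z) = z) ∧
      deriv φ 0 ≠ 0 := by
    have h1 := hψ.analyticAt_localInverse hx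
    have h2 := (hψ.hasStrictDerivAt.hasStrictFDerivAt_equiv hx).eventually_left_inverse
    have h3 := (hψ.hasStrictDerivAt.hasStrictFDerivAt_equiv hx).eventually_right_inverse
    have h4 := (hψ.hasStrictDerivAt.to_localInverse hx).hasDerivAt.deriv
    rw [hψ0] at h1 h3 h4
    refine ⟨_, h1, h2, h3, ?_⟩
    rw [h4]
    exact inv_ne_zero hx
  have hφH : AnalyticAt ℂ φ (H (0, 0)) := by rw [hH0]; exact hφ
  set U : ℂ × ℂ → ℂ := fun p => deriv φ (H p) * u p with hUdef
  have hU : AnalyticAt ℂ U (0, 0) :=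
    (AnalyticAt.fun_comp (g := deriv φ) (f := H) hφH.deriv hHa).mul hua
  have hU0 : U (0, 0) ≠ 0 := by
    simp only [hUdef, hH0]
    exact mul_ne_zero hφd hu0
  set w : ℂ × ℂ → ℂ := fun p => ∫ t in (0 : ℝ)..1, (t : ℂ) ^ (k - 1) * U (pnfDil t p) with hwdef
  have hw : AnalyticAt ℂ w (0, 0) := pnf_analyticAt_integral (k - 1) U hU
  have hw0 : w (0, 0) ≠ 0 := by
    have : w (0, 0) = (∫ t in (0 : ℝ)..1, (t : ℂ) ^ (k - 1)) * U (0, 0) := by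
      rw [← intervalIntegral.integral_mul_const]
      simp [hwdef, pnfDil_apply]
    rw [this]
    refine mul_ne_zero ?_ hU0
    have h : (∫ t in (0 : ℝ)..1, (t : ℂ) ^ (k - 1)) = ((∫ t in (0 : ℝ)..1, t ^ (k - 1) : ℝ) : ℂ) := by
      rw [← intervalIntegral.integral_ofReal]
      simp
    rw [h, integral_pow]
    have : k - 1 + 1 = k := by omega
    rw [this]
    have hk' : (((k - 1 : ℕ) : ℝ) + 1) ≠ 0 := by positivity
    have hk0 : k ≠ 0 := by omega
    simp only [one_pow, zero_pow hk0, sub_zero]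
    exact Complex.ofReal_ne_zero.2 (one_div_ne_zero hk')
  obtain ⟨v, hv, hv0, hvk⟩ := pnf_root k (by omega) w hw hw0
  refine ⟨v, ψ, hv.eventually_analyticAt, hv0, hψ.eventually_analyticAt, hψ0, hx, ?_⟩
  have hHt : Tendsto H (nhds (0, 0)) (nhds 0) := by
    have := hHa.continuousAt.tendsto
    rwa [hH0] at this
  have hfst : Tendsto (Prod.fst : ℂ × ℂ → ℂ) (nhds ((0 : ℂ), (0 : ℂ))) (nhds 0) :=
    continuous_fst.tendsto _
  have hall := hH.and (hdy.and ((hHt.eventually hφ.eventually_analyticAt).and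
    hU.eventually_analyticAt))
  obtain ⟨ε, hε, hball⟩ := Metric.eventually_nhds_iff_ball.1 hall
  filter_upwards [Metric.ball_mem_nhds _ hε, hHt.eventually hφr, hfst.eventually hφl]
    with p hp hpr hpl
  have hmem : ∀ t : ℝ, t ∈ Set.uIcc (0 : ℝ) 1 → pnfDil t p ∈ Metric.ball ((0 : ℂ), (0 : ℂ)) ε := by
    intro t ht
    rw [Set.uIcc_of_le zero_le_one] at ht
    have h00 : ((0 : ℂ), (0 : ℂ)) = 0 := rfl
    rw [h00, mem_ball_zero_iff] at hp ⊢
    exact (pnfDil_norm_apply ht.1 ht.2 p).trans_lt hp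
  have hcont : Continuous fun t : ℝ => pnfDil t p := by
    simp only [pnfDil_apply]
    fun_prop
  have key : φ (H p) - p.1 = p.2 ^ k * w p := by
    have hFTC := intervalIntegral.integral_eq_sub_of_hasDerivAt (a := 0) (b := 1)
      (f := fun t : ℝ => φ (H (pnfDil t p)))
      (f' := fun t : ℝ => p.2 ^ k * ((t : ℂ) ^ (k - 1) * U (pnfDil t p))) ?_ ?_
    · rw [intervalIntegral.integral_const_mul] at hFTC
      have e1 : pnfDil 1 p = p := by simp [pnfDil_apply]
      have e0 : H (pnfDil 0 p) = ψ p.1 := by simp [pnfDil_apply, hψdef]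
      simp only [e1, e0, hpl] at hFTC
      exact hFTC.symm
    · intro t ht
      obtain ⟨a1, a2, a3, -⟩ := hball _ (hmem t ht)
      have d1 : HasDerivAt (fun y : ℂ => H (p.1, y)) ((t * p.2) ^ (k - 1) * u (pnfDil t p))
          ((t : ℂ) * p.2) := by
        have hd : DifferentiableAt ℂ (fun y : ℂ => H (p.1, y)) ((t : ℂ) * p.2) := by
          rw [pnfDil_apply] at a1
          exact (AnalyticAt.fun_comp (g := H) (f := fun y : ℂ => (p.1, y)) a1
            (analyticAt_const.prod analyticAt_id)).differentiableAt
        have := hd.hasDerivAt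
        simp only [pnfDil_apply] at a2 ⊢
        rwa [a2] at this
      have d2 : HasDerivAt φ (deriv φ (H (pnfDil t p))) (H (p.1, (t : ℂ) * p.2)) := by
        rw [pnfDil_apply] at a3 ⊢
        exact a3.differentiableAt.hasDerivAt
      have d3 : HasDerivAt (fun s : ℝ => (s : ℂ) * p.2) p.2 t := by
        simpa using (Complex.ofRealCLM.hasDerivAt (x := t)).mul_const p.2
      have d4 := (d2.comp ((t : ℂ) * p.2) d1).scomp t d3
      have e : (fun s : ℝ => φ (H (pnfDil s p))) =
          (φ ∘ fun y : ℂ => H (p.1, y)) ∘ fun s : ℝ => (s : ℂ) * p.2 := by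
        funext s
        simp [pnfDil_apply]
      rw [e]
      convert d4 using 1
      obtain ⟨j, rfl⟩ : ∃ j, k = j + 1 := ⟨k - 1, by omega⟩
      simp only [hUdef, Nat.add_sub_cancel, smul_eq_mul]
      ring
    · refine ContinuousOn.intervalIntegrable ?_
      intro t ht
      obtain ⟨-, -, -, a4⟩ := hball _ (hmem t ht)
      have c1 : ContinuousAt (fun t : ℝ => U (pnfDil t p)) t :=
        ContinuousAt.comp' (g := U) a4.continuousAt hcont.continuousAt
      have c2 : ContinuousAt (fun t : ℝ => (t : ℂ) ^ (k - 1)) t := by fun_prop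
      exact (continuousAt_const.mul (c2.mul c1)).continuousWithinAt
  rw [mul_pow, hvk, ← key, add_sub_cancel, hpr]
end

section
/- Let p ∈ ℤ and q ≥ 1 be an integer with gcd(p,q) = 1, set α = p/q, and let f(x) = exp(α·Log x) (Log the principal branch of Complex.log) restricted to an open disk D₀ ⊆ ℂ ∖ {0} centered at x₀ = 1. Then the set S of germs at the point 1 obtained from f by analytic continuation along a chain of disks in Ω := ℂ ∖ {0} is exactly { germ at 1 of x ↦ exp(2πi·p·j/q)·exp(α·Log x) : j = 0, 1, …, q−1 }; in particular S has exactly q elements. -/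
open Filter Metric Set

lemma drp_primitive (p : ℤ) (q : ℕ) (hq : 1 ≤ q) (hgcd : Int.gcd p (q : ℤ) = 1) :
    IsPrimitiveRoot (Complex.exp (2 * Real.pi * Complex.I * p / q)) q := by
  have h := (Complex.isPrimitiveRoot_exp q (by omega)).zpow_of_gcd_eq_one p hgcd
  rw [← Complex.exp_int_mul] at h
  have e : (p : ℂ) * (2 * Real.pi * Complex.I / q) = 2 * Real.pi * Complex.I * p / q := by ring
  rw [e] at h
  exact h

lemma drp_pow (p : ℤ) (q : ℕ) (j : ℕ) :
    Complex.exp (2 * Real.pi * Complex.I * p * j / q) =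
      (Complex.exp (2 * Real.pi * Complex.I * p / q)) ^ j := by
  rw [← Complex.exp_nat_mul]
  congr 1
  ring

lemma drp_f_pow (p : ℤ) (q : ℕ) (hq : 1 ≤ q) (x : ℂ) (hx : x ≠ 0) :
    (Complex.exp ((p / q : ℂ) * Complex.log x)) ^ q = x ^ p := by
  have hq' : (q : ℂ) ≠ 0 := by exact_mod_cast (by omega : q ≠ 0)
  rw [← Complex.exp_nat_mul]
  have : (q : ℂ) * ((p / q : ℂ) * Complex.log x) = p * Complex.log x := by
    field_simp
  rw [this, Complex.exp_int_mul, Complex.exp_log hx]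

lemma drp_identity (p : ℤ) (q : ℕ) (c : ℂ) (r : ℝ) (F : ℂ → ℂ)
    (h0 : ball c r ⊆ ({0}ᶜ : Set ℂ)) (hF : DifferentiableOn ℂ F (ball c r))
    (U : Set ℂ) (hU : IsOpen U) (hne : (U ∩ ball c r).Nonempty)
    (h : ∀ x ∈ U ∩ ball c r, F x ^ q = x ^ p) :
    ∀ x ∈ ball c r, F x ^ q = x ^ p := by
  obtain ⟨z, hz⟩ := hne
  have h1 : AnalyticOnNhd ℂ (fun x => F x ^ q) (ball c r) :=
    (hF.pow q).analyticOnNhd isOpen_ball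
  have h2 : AnalyticOnNhd ℂ (fun x : ℂ => x ^ p) (ball c r) := by
    apply DifferentiableOn.analyticOnNhd _ isOpen_ball
    intro x hx
    exact (differentiableAt_zpow.2 (Or.inl (h0 hx))).differentiableWithinAt
  exact h1.eqOn_of_preconnected_of_eventuallyEq h2 (convex_ball c r).isPreconnected hz.2
    (Filter.eventually_of_mem ((hU.inter isOpen_ball).mem_nhds hz) h)

lemma drp_local (q : ℕ) (hq : 1 ≤ q) (G : ℂ → ℂ) (hG : ContinuousAt G 1)
    (h : ∀ᶠ x in nhds (1 : ℂ), G x ^ q = 1) : ∀ᶠ x in nhds (1 : ℂ), G x = G 1 := by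
  have hfin : ({z : ℂ | z ^ q = 1} \ {G 1}).Finite := by
    apply Set.Finite.subset _ Set.sdiff_subset
    have := (Polynomial.nthRoots q (1 : ℂ)).toFinset.finite_toSet
    apply this.subset
    intro z hz
    simp only [Finset.mem_coe, Multiset.mem_toFinset]
    exact (Polynomial.mem_nthRoots (by omega)).2 hz
  have hn : ({z : ℂ | z ^ q = 1} \ {G 1})ᶜ ∈ nhds (G 1) :=
    hfin.isClosed.isOpen_compl.mem_nhds (by simp)
  filter_upwards [h, hG hn] with x hx hx2
  by_contra hne
  exact hx2 ⟨hx, hne⟩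

lemma drp_forward (p : ℤ) (q : ℕ) (hq : 1 ≤ q)
    (hgcd : Int.gcd p (q : ℤ) = 1) (r : ℝ) (hr : 0 < r)
    (hD : Metric.ball (1 : ℂ) r ⊆ ({0}ᶜ : Set ℂ)) (g : Filter.Germ (nhds (1 : ℂ)) ℂ)
    (hg : ContinuationGerm ({0}ᶜ) (fun x => Complex.exp ((p / q : ℂ) * Complex.log x))
          (Metric.ball (1 : ℂ) r) 1 g) :
    ∃ j : ℕ, j < q ∧
        g = ↑(fun x : ℂ => Complex.exp (2 * Real.pi * Complex.I * p * j / q) *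
          Complex.exp ((p / q : ℂ) * Complex.log x)) := by
  obtain ⟨n, D, F, hD0, hF0, hDk, hstep, h1, rfl⟩ := hg
  have key : ∀ k : Fin (n + 1), ∀ x ∈ D k, F k x ^ q = x ^ p := by
    intro k
    induction k using Fin.induction with
    | zero =>
      intro x hx
      rw [hD0] at hx
      rw [hF0 hx]
      exact drp_f_pow p q hq x (hD hx)
    | succ k ih =>
      obtain ⟨⟨c, ρ, hρ, hc⟩, hsub, hdiff⟩ := hDk k.succ
      obtain ⟨⟨c', ρ', hρ', hc'⟩, -, -⟩ := hDk k.castSucc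
      obtain ⟨hne, heq⟩ := hstep k
      rw [hc] at hsub hdiff hne heq ⊢
      refine drp_identity p q c ρ _ hsub hdiff (D k.castSucc) (by rw [hc']; exact isOpen_ball)
        hne ?_
      intro x hx
      rw [← heq hx]
      exact ih x hx.1
  obtain ⟨⟨c, ρ, hρ, hc⟩, hsub, hdiff⟩ := hDk (Fin.last n)
  have hnh : D (Fin.last n) ∈ nhds (1 : ℂ) := by
    rw [hc] at h1 ⊢
    exact isOpen_ball.mem_nhds h1
  set H := F (Fin.last n) with hH
  set f : ℂ → ℂ := fun x => Complex.exp ((p / q : ℂ) * Complex.log x) with hf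
  have hfne : ∀ x, f x ≠ 0 := fun x => Complex.exp_ne_zero _
  have hfc : ContinuousAt f 1 := by
    have : ContinuousAt Complex.log 1 := continuousAt_clog (by simp)
    exact Complex.continuous_exp.continuousAt.comp (continuousAt_const.mul this)
  have hHc : ContinuousAt H 1 := (hdiff.differentiableAt hnh).continuousAt
  have hGc : ContinuousAt (fun x => H x / f x) 1 := hHc.div hfc (hfne 1)
  have hev : ∀ᶠ x in nhds (1 : ℂ), (H x / f x) ^ q = 1 := by
    filter_upwards [hnh] with x hx
    rw [div_pow, key _ x hx, hf]
    simp only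
    rw [drp_f_pow p q hq x (hsub hx)]
    exact div_self (zpow_ne_zero _ (hsub hx))
  have hconst := drp_local q hq _ hGc hev
  have hroot := hev.self_of_nhds
  have : NeZero q := ⟨by omega⟩
  obtain ⟨j, hj, hjz⟩ := (drp_primitive p q hq hgcd).eq_pow_of_pow_eq_one hroot
  refine ⟨j, hj, ?_⟩
  rw [Filter.Germ.coe_eq]
  filter_upwards [hconst] with x hx
  rw [drp_pow, hjz, ← hx]
  exact (div_mul_cancel₀ _ (hfne x)).symm

/-- branch of the power on the disk around `exp (i s)` -/
noncomputable def drpBranch (a : ℂ) (s : ℝ) (x : ℂ) : ℂ :=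
  Complex.exp (a * (Complex.log (x * Complex.exp (-(s * Complex.I))) + s * Complex.I))

lemma drp_re_pos (s : ℝ) (x : ℂ) (hx : x ∈ ball (Complex.exp (s * Complex.I)) 1) :
    0 < (x * Complex.exp (-(s * Complex.I))).re := by
  have h1 : ‖x * Complex.exp (-(s * Complex.I)) - 1‖ < 1 := by
    have h2 : x * Complex.exp (-(s * Complex.I)) - 1 =
        (x - Complex.exp (s * Complex.I)) * Complex.exp (((-s : ℝ) : ℂ) * Complex.I) := by
      have : Complex.exp (s * Complex.I) * Complex.exp (((-s : ℝ) : ℂ) * Complex.I) = 1 := by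
        rw [← Complex.exp_add]; simp
      rw [sub_mul, this]
      simp
    rw [h2, norm_mul, Complex.norm_exp_ofReal_mul_I, mul_one]
    exact mem_ball_iff_norm.1 hx
  have h3 := (Complex.abs_re_le_norm _).trans_lt h1
  rw [abs_lt] at h3
  simp only [Complex.sub_re, Complex.one_re] at h3
  linarith [h3.1]

lemma drp_branch_diff (a : ℂ) (s : ℝ) :
    DifferentiableOn ℂ (drpBranch a s) (ball (Complex.exp (s * Complex.I)) 1) := by
  intro x hx
  apply DifferentiableAt.differentiableWithinAt
  unfold drpBranch
  have h : x * Complex.exp (-(s * Complex.I)) ∈ Complex.slitPlane :=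
    Or.inl (drp_re_pos s x hx)
  have h2 : DifferentiableAt ℂ (fun x => Complex.log (x * Complex.exp (-(s * Complex.I)))) x :=
    DifferentiableAt.clog (by fun_prop) h
  exact ((h2.add_const _).const_mul a).cexp

lemma drp_branch_step (a : ℂ) (s δ : ℝ) (hδ : 0 ≤ δ) (hδ1 : δ < 1) (x : ℂ)
    (hx : x ∈ ball (Complex.exp (s * Complex.I)) 1) :
    drpBranch a s x = drpBranch a (s + δ) x := by
  have hre := drp_re_pos s x hx
  unfold drpBranch
  set y := x * Complex.exp (-(s * Complex.I)) with hy
  have hy0 : y ≠ 0 := by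
    intro h; simp [h] at hre
  have harg := abs_lt.1 (Complex.abs_arg_lt_pi_div_two_iff.2 (Or.inl hre))
  have hpi := Real.pi_gt_three
  have h1 : x * Complex.exp (-(((s + δ : ℝ) : ℂ) * Complex.I)) =
      Complex.exp (Complex.log y - δ * Complex.I) := by
    rw [Complex.exp_sub, Complex.exp_log hy0, hy, div_eq_mul_inv, ← Complex.exp_neg, mul_assoc,
      ← Complex.exp_add]
    congr 2
    push_cast
    ring
  rw [h1, Complex.log_exp]
  · congr 1
    push_cast
    ring
  · simp [Complex.log_im]; linarith [harg.1]
  · simp [Complex.log_im]; linarith [harg.2]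

lemma drp_near (s δ : ℝ) (hδ : 0 ≤ δ) (hδ1 : δ < 1) :
    Complex.exp (s * Complex.I) ∈ ball (Complex.exp (((s + δ : ℝ) : ℂ) * Complex.I)) 1 := by
  rw [mem_ball_iff_norm']
  have : Complex.exp (((s + δ : ℝ) : ℂ) * Complex.I) - Complex.exp (s * Complex.I) =
      Complex.exp (s * Complex.I) * (Complex.exp (Complex.I * δ) - 1) := by
    rw [mul_sub, ← Complex.exp_add, mul_one]
    congr 2
    push_cast
    ring
  rw [this, norm_mul, Complex.norm_exp_ofReal_mul_I, one_mul]
  refine (Real.norm_exp_I_mul_ofReal_sub_one_le).trans_lt ?_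
  rw [Real.norm_eq_abs, abs_of_nonneg hδ]
  exact hδ1

lemma drp_backward (a : ℂ) (r : ℝ) (hr : 0 < r)
    (hD : Metric.ball (1 : ℂ) r ⊆ ({0}ᶜ : Set ℂ)) (j : ℕ) :
    ContinuationGerm ({0}ᶜ) (fun x => Complex.exp (a * Complex.log x))
      (Metric.ball (1 : ℂ) r) 1
      ↑(fun x : ℂ => Complex.exp (a * (2 * Real.pi * Complex.I * j)) *
          Complex.exp (a * Complex.log x)) := by
  have hr1 : r ≤ 1 := by
    by_contra h
    push Not at h
    have : (0 : ℂ) ∈ ball (1 : ℂ) r := by simpa using h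
    exact hD this rfl
  have hpi := Real.pi_gt_three
  have hpi4 : Real.pi / 4 < 1 := by linarith [Real.pi_lt_four]
  have hend : Complex.exp ((((8 * j : ℕ) * (Real.pi / 4) : ℝ) : ℂ) * Complex.I) = 1 := by
    rw [Complex.exp_eq_one_iff]
    exact ⟨j, by push_cast; ring⟩
  have hsubball : ∀ k : ℕ,
      ball (Complex.exp (((k * (Real.pi / 4) : ℝ) : ℂ) * Complex.I)) (if k = 0 then r else 1) ⊆
      ball (Complex.exp (((k * (Real.pi / 4) : ℝ) : ℂ) * Complex.I)) 1 := by
    intro k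
    apply ball_subset_ball
    split_ifs
    · exact hr1
    · exact le_rfl
  have hpos : ∀ k : ℕ, (0 : ℝ) < (if k = 0 then r else 1) := by
    intro k
    split_ifs
    · exact hr
    · exact one_pos
  refine ⟨8 * j, fun k => ball (Complex.exp ((((k : ℕ) * (Real.pi / 4) : ℝ) : ℂ) * Complex.I))
    (if (k : ℕ) = 0 then r else 1), fun k => drpBranch a ((k : ℕ) * (Real.pi / 4)),
    ?_, ?_, ?_, ?_, ?_, ?_⟩
  · simp
  · intro x hx
    simp [drpBranch]
  · intro k
    refine ⟨⟨_, _, hpos k, rfl⟩, ?_, (drp_branch_diff a _).mono (hsubball k)⟩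
    intro x hx h0
    have := drp_re_pos _ x (hsubball k hx)
    rw [Set.mem_singleton_iff.1 h0] at this
    simp at this
  · intro k
    have hs : (((k.succ : Fin (8 * j + 1)) : ℕ) : ℝ) * (Real.pi / 4) =
        ((k.castSucc : Fin (8 * j + 1)) : ℕ) * (Real.pi / 4) + Real.pi / 4 := by
      simp only [Fin.val_succ, Fin.val_castSucc]
      push_cast
      ring
    have hk : ((k.succ : Fin (8 * j + 1)) : ℕ) ≠ 0 := by simp
    constructor
    · refine ⟨_, mem_ball_self (hpos _), ?_⟩
      beta_reduce
      rw [if_neg hk, hs]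
      exact drp_near _ _ (by linarith) hpi4
    · intro x hx
      simp only
      rw [hs]
      exact drp_branch_step a _ _ (by linarith) hpi4 x (hsubball _ hx.1)
  · simp only [Fin.val_last]
    rw [hend]
    exact mem_ball_self (hpos _)
  · congr 1
    funext x
    simp only [Fin.val_last, drpBranch]
    rw [Complex.exp_neg, hend, inv_one, mul_one, ← Complex.exp_add]
    congr 1
    push_cast
    ring

/-- **Determinations of `x^{p/q}`.**
For `α = p/q` in lowest terms (`q ≥ 1`), the germs at `1` obtained from
`f(x) = exp(α Log x)` by analytic continuation along chains of disks in `ℂ ∖ {0}` are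
exactly the germs of `x ↦ exp(2πi·p·j/q)·exp(α Log x)` for `j = 0, …, q−1`;
in particular there are exactly `q` of them. -/
theorem determinations_rational_power (p : ℤ) (q : ℕ) (hq : 1 ≤ q)
    (hgcd : Int.gcd p (q : ℤ) = 1) (r : ℝ) (hr : 0 < r)
    (hD : Metric.ball (1 : ℂ) r ⊆ ({0}ᶜ : Set ℂ)) :
    {g : Filter.Germ (nhds (1 : ℂ)) ℂ |
        ContinuationGerm ({0}ᶜ) (fun x => Complex.exp ((p / q : ℂ) * Complex.log x))
          (Metric.ball (1 : ℂ) r) 1 g} =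
      {g : Filter.Germ (nhds (1 : ℂ)) ℂ | ∃ j : ℕ, j < q ∧
        g = ↑(fun x : ℂ => Complex.exp (2 * Real.pi * Complex.I * p * j / q) *
          Complex.exp ((p / q : ℂ) * Complex.log x))} ∧
    {g : Filter.Germ (nhds (1 : ℂ)) ℂ |
        ContinuationGerm ({0}ᶜ) (fun x => Complex.exp ((p / q : ℂ) * Complex.log x))
          (Metric.ball (1 : ℂ) r) 1 g}.ncard = q := by
  have hset : {g : Filter.Germ (nhds (1 : ℂ)) ℂ |
        ContinuationGerm ({0}ᶜ) (fun x => Complex.exp ((p / q : ℂ) * Complex.log x))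
          (Metric.ball (1 : ℂ) r) 1 g} =
      {g : Filter.Germ (nhds (1 : ℂ)) ℂ | ∃ j : ℕ, j < q ∧
        g = ↑(fun x : ℂ => Complex.exp (2 * Real.pi * Complex.I * p * j / q) *
          Complex.exp ((p / q : ℂ) * Complex.log x))} := by
    ext g
    constructor
    · exact drp_forward p q hq hgcd r hr hD g
    · rintro ⟨j, -, rfl⟩
      have h := drp_backward (p / q : ℂ) r hr hD j
      have e : (p / q : ℂ) * (2 * Real.pi * Complex.I * j) =
        2 * Real.pi * Complex.I * p * j / q := by ring
      rw [e] at h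
      exact h
  refine ⟨hset, ?_⟩
  rw [hset]
  have himg : {g : Filter.Germ (nhds (1 : ℂ)) ℂ | ∃ j : ℕ, j < q ∧
        g = ↑(fun x : ℂ => Complex.exp (2 * Real.pi * Complex.I * p * j / q) *
          Complex.exp ((p / q : ℂ) * Complex.log x))} =
      (fun j : ℕ => ((fun x : ℂ => Complex.exp (2 * Real.pi * Complex.I * p * j / q) *
          Complex.exp ((p / q : ℂ) * Complex.log x) : ℂ → ℂ) : Filter.Germ (nhds (1 : ℂ)) ℂ)) ''
        (Set.Iio q) := by
    ext g
    constructor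
    · rintro ⟨j, hj, rfl⟩
      exact ⟨j, hj, rfl⟩
    · rintro ⟨j, hj, rfl⟩
      exact ⟨j, hj, rfl⟩
  rw [himg, Set.ncard_image_of_injOn]
  · rw [← Finset.coe_range, Set.ncard_coe_finset, Finset.card_range]
  · intro i hi j hj hij
    have h := (Filter.Germ.coe_eq.1 hij).self_of_nhds
    have h2 := mul_right_cancel₀ (Complex.exp_ne_zero _) h
    rw [drp_pow, drp_pow] at h2
    exact (drp_primitive p q hq hgcd).pow_inj hi hj h2
end

section
/- Let k ≥ 1 be an integer, let c ∈ ℂ, let x₀ ∈ ℂ ∖ {c}, and let f be a holomorphic function on an open disk D₀ ⊆ Ω := ℂ ∖ {c} centered at x₀ satisfying f(x)^k = c − x for all x ∈ D₀. Then the set S of germs at x₀ obtained from f by analytic continuation along a chain of disks in Ω is exactly { germ at x₀ of ζ·f : ζ ∈ ℂ, ζ^k = 1 }; in particular S has exactly k elements, and every g ∈ S satisfies g(x)^k = c − x near x₀. -/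
open Filter Metric Set

lemma ratio_const (k : ℕ) (hk : 1 ≤ k) (S : Set ℂ) (hS : IsPreconnected S) (u v : ℂ → ℂ)
    (hu : ContinuousOn u S) (hv : ContinuousOn v S) (h : ∀ x ∈ S, u x ^ k = v x ^ k)
    (hv0 : ∀ x ∈ S, v x ≠ 0) (x₀ : ℂ) (hx : x₀ ∈ S) :
    ∃ ζ : ℂ, ζ ^ k = 1 ∧ ∀ x ∈ S, u x = ζ * v x := by
  have key : ∀ x ∈ S, (u x / v x) ^ k = 1 := by
    intro x hx
    rw [div_pow, h x hx, div_self (pow_ne_zero _ (hv0 x hx))]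
  have hfin : ({z : ℂ | z ^ k = 1} : Set ℂ).Finite := by
    refine (Polynomial.nthRootsFinset k (1 : ℂ)).finite_toSet.subset ?_
    intro z hz
    simpa [Polynomial.mem_nthRootsFinset (show 0 < k by omega)] using hz
  have hd : IsDiscrete ({z : ℂ | z ^ k = 1} : Set ℂ) := hfin.isDiscrete
  refine ⟨u x₀ / v x₀, key x₀ hx, fun x hxS => ?_⟩
  have := hS.constant_of_mapsTo hd (f := fun x => u x / v x) (hu.div hv hv0)
    (fun x hx => key x hx) hxS hx
  rw [← this, div_mul_cancel₀ _ (hv0 x hxS)]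

/-- Pure power identity propagates along a chain. -/
lemma chain_pow (k : ℕ) (c : ℂ) (n : ℕ) (D : Fin (n + 1) → Set ℂ) (F : Fin (n + 1) → ℂ → ℂ)
    (h0 : ∀ x ∈ D 0, F 0 x ^ k = c - x)
    (hD : ∀ j, (∃ a : ℂ, ∃ r : ℝ, 0 < r ∧ D j = Metric.ball a r) ∧
      DifferentiableOn ℂ (F j) (D j))
    (hc : ∀ j : Fin n, (D j.castSucc ∩ D j.succ).Nonempty ∧
      Set.EqOn (F j.castSucc) (F j.succ) (D j.castSucc ∩ D j.succ)) (j : Fin (n + 1)) :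
    ∀ x ∈ D j, F j x ^ k = c - x := by
  induction j using Fin.induction with
  | zero => exact h0
  | succ j ih =>
    obtain ⟨⟨a, ha⟩, he⟩ := hc j
    obtain ⟨⟨p, s, hs, hp⟩, -⟩ := hD j.castSucc
    obtain ⟨⟨q, t, ht, hq⟩, hdiff⟩ := hD j.succ
    have ho1 : IsOpen (D j.castSucc) := hp ▸ isOpen_ball
    have ho2 : IsOpen (D j.succ) := hq ▸ isOpen_ball
    have hpre : IsPreconnected (D j.succ) := hq ▸ (convex_ball q t).isPreconnected
    have A1 : AnalyticOnNhd ℂ (fun x => F j.succ x ^ k) (D j.succ) :=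
      (hdiff.pow k).analyticOnNhd ho2
    have A2 : AnalyticOnNhd ℂ (fun x => c - x) (D j.succ) :=
      DifferentiableOn.analyticOnNhd (by fun_prop) ho2
    refine A1.eqOn_of_preconnected_of_eventuallyEq A2 hpre ha.2 ?_
    filter_upwards [(ho1.inter ho2).mem_nhds ha] with x hx
    rw [← he hx]
    exact ih x hx.1

/-- The branch on the disk at angle `j * π / 2`. -/
noncomputable def br (k : ℕ) (c x₀ y₀ : ℂ) (j : ℕ) (x : ℂ) : ℂ :=
  y₀ * Complex.exp ((j * (Real.pi / 2) * Complex.I +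
    Complex.log ((x - c) / ((x₀ - c) * Complex.I ^ j))) / k)

/-- The disk at angle `j * π / 2`. -/
def dsk (c x₀ : ℂ) (j : ℕ) : Set ℂ := ball (c + (x₀ - c) * Complex.I ^ j) ‖x₀ - c‖

lemma re_pos_of_dsk {c x₀ : ℂ} (hx₀ : x₀ ≠ c) (j : ℕ) {x : ℂ} (hx : x ∈ dsk c x₀ j) :
    0 < ((x - c) / ((x₀ - c) * Complex.I ^ j)).re := by
  have h1 : x₀ - c ≠ 0 := sub_ne_zero.2 hx₀
  have h2 : (x₀ - c) * Complex.I ^ j ≠ 0 := mul_ne_zero h1 (pow_ne_zero _ Complex.I_ne_zero)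
  rw [dsk, mem_ball, dist_eq_norm] at hx
  have h3 : ‖(x - c) / ((x₀ - c) * Complex.I ^ j) - 1‖ < 1 := by
    rw [div_sub_one h2, norm_div, norm_mul, norm_pow, Complex.norm_I, one_pow, mul_one,
      div_lt_one (norm_pos_iff.2 h1)]
    rwa [← sub_sub] at hx
  have h4 := (abs_le.1 (Complex.abs_re_le_norm ((x - c) / ((x₀ - c) * Complex.I ^ j) - 1))).1
  rw [Complex.sub_re, Complex.one_re] at h4
  linarith

lemma dsk_sub {c x₀ : ℂ} (hx₀ : x₀ ≠ c) (j : ℕ) : dsk c x₀ j ⊆ {c}ᶜ := by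
  intro x hx hxc
  have := re_pos_of_dsk hx₀ j hx
  rw [mem_singleton_iff.1 hxc] at this
  simp at this

lemma br_diff {c x₀ : ℂ} (hx₀ : x₀ ≠ c) (k : ℕ) (y₀ : ℂ) (j : ℕ) :
    DifferentiableOn ℂ (br k c x₀ y₀ j) (dsk c x₀ j) := by
  intro x hx
  have hs : (x - c) / ((x₀ - c) * Complex.I ^ j) ∈ Complex.slitPlane :=
    Or.inl (re_pos_of_dsk hx₀ j hx)
  apply DifferentiableAt.differentiableWithinAt
  unfold br
  have : DifferentiableAt ℂ (fun x => Complex.log ((x - c) / ((x₀ - c) * Complex.I ^ j))) x :=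
    DifferentiableAt.clog (by fun_prop) hs
  fun_prop

lemma br_step {c x₀ : ℂ} (hx₀ : x₀ ≠ c) (k : ℕ) (y₀ : ℂ) (j : ℕ) :
    EqOn (br k c x₀ y₀ j) (br k c x₀ y₀ (j + 1)) (dsk c x₀ j ∩ dsk c x₀ (j + 1)) := by
  rintro x ⟨hx, -⟩
  have hp := re_pos_of_dsk hx₀ j hx
  unfold br
  set w := (x - c) / ((x₀ - c) * Complex.I ^ j) with hw
  have hw0 : w ≠ 0 := by
    intro h
    simp [h] at hp
  have e : (x - c) / ((x₀ - c) * Complex.I ^ (j + 1)) = (-Complex.I) * w := by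
    rw [hw, pow_succ, ← mul_assoc, ← div_div, div_eq_mul_inv _ Complex.I, Complex.inv_I]
    ring
  have ha := abs_lt.1 (Complex.abs_arg_lt_pi_div_two_iff.2 (Or.inl hp))
  have hpi := Real.pi_pos
  rw [e, Complex.log_mul (neg_ne_zero.2 Complex.I_ne_zero) hw0
    (by rw [Complex.arg_neg_I]; constructor <;> linarith), Complex.log_neg_I]
  push_cast
  ring_nf

lemma dsk_inter {c x₀ : ℂ} (hx₀ : x₀ ≠ c) (j : ℕ) :
    (dsk c x₀ j ∩ dsk c x₀ (j + 1)).Nonempty := by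
  have h1 : 0 < ‖x₀ - c‖ := norm_pos_iff.2 (sub_ne_zero.2 hx₀)
  have aux : ∀ z : ℂ, Complex.normSq z = 1 / 2 → ‖z‖ < 1 := by
    intro z hz
    rw [Complex.normSq_eq_norm_sq] at hz
    nlinarith [norm_nonneg z]
  have aux2 : ∀ z : ℂ, ‖z‖ < 1 → ‖(x₀ - c) * Complex.I ^ j * z‖ < ‖x₀ - c‖ := by
    intro z hz
    rw [norm_mul, norm_mul, norm_pow, Complex.norm_I, one_pow, mul_one]
    nlinarith
  refine ⟨c + (x₀ - c) * Complex.I ^ j * ((1 + Complex.I) / 2), ?_, ?_⟩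
  · rw [dsk, mem_ball, dist_eq_norm]
    have e : c + (x₀ - c) * Complex.I ^ j * ((1 + Complex.I) / 2)
        - (c + (x₀ - c) * Complex.I ^ j) = (x₀ - c) * Complex.I ^ j * ((-1 + Complex.I) / 2) := by
      ring
    rw [e]
    refine aux2 _ (aux _ ?_)
    rw [Complex.normSq_div, Complex.normSq_apply, Complex.normSq_apply]
    norm_num
  · rw [dsk, mem_ball, dist_eq_norm]
    have e : c + (x₀ - c) * Complex.I ^ j * ((1 + Complex.I) / 2)
        - (c + (x₀ - c) * Complex.I ^ (j + 1)) = (x₀ - c) * Complex.I ^ j * ((1 - Complex.I) / 2) := by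
      ring
    rw [e]
    refine aux2 _ (aux _ ?_)
    rw [Complex.normSq_div, Complex.normSq_apply, Complex.normSq_apply]
    norm_num

lemma br_turn {c x₀ : ℂ} (k : ℕ) (y₀ : ℂ) (m : ℕ) (x : ℂ) :
    br k c x₀ y₀ (4 * m) x =
      Complex.exp (2 * Real.pi * Complex.I / k) ^ m * br k c x₀ y₀ 0 x := by
  unfold br
  rw [← Complex.exp_nat_mul, mul_left_comm, ← Complex.exp_add, pow_mul, Complex.I_pow_four]
  simp only [one_pow, pow_zero]
  congr 2
  push_cast
  ring

lemma br_zero_pow {c x₀ : ℂ} (hx₀ : x₀ ≠ c) (k : ℕ) (hk : 1 ≤ k) (y₀ : ℂ) (hy : y₀ ^ k = c - x₀)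
    (x : ℂ) (hx : x ≠ c) : br k c x₀ y₀ 0 x ^ k = c - x := by
  have h1 : x₀ - c ≠ 0 := sub_ne_zero.2 hx₀
  have h2 : x - c ≠ 0 := sub_ne_zero.2 hx
  have hk0 : (k : ℂ) ≠ 0 := by exact_mod_cast (by omega : k ≠ 0)
  unfold br
  rw [mul_pow, hy, ← Complex.exp_nat_mul, mul_div_cancel₀ _ hk0]
  simp only [Nat.cast_zero, zero_mul, zero_add, pow_zero, mul_one]
  rw [Complex.exp_log (div_ne_zero h2 h1)]
  field_simp
  ring

/-- **Determinations of `(c − x)^{1/k}`.**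
Let `f` be holomorphic on a disk `D₀ ⊆ ℂ ∖ {c}` centered at `x₀` with `f(x)^k = c − x`.
The germs at `x₀` obtained from `f` by analytic continuation along chains of disks in
`ℂ ∖ {c}` are exactly the germs of `ζ·f` for the `k`-th roots of unity `ζ`; in particular
there are exactly `k` of them, and each of them satisfies `g(x)^k = c − x` near `x₀`. -/
theorem determinations_kth_root (k : ℕ) (hk : 1 ≤ k) (c x₀ : ℂ) (hx₀ : x₀ ≠ c)
    (r : ℝ) (hr : 0 < r) (hD : Metric.ball x₀ r ⊆ ({c}ᶜ : Set ℂ))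
    (f : ℂ → ℂ) (hf : DifferentiableOn ℂ f (Metric.ball x₀ r))
    (hfk : ∀ x ∈ Metric.ball x₀ r, f x ^ k = c - x) :
    {g : Filter.Germ (nhds x₀) ℂ |
        ContinuationGerm ({c}ᶜ) f (Metric.ball x₀ r) x₀ g} =
      {g : Filter.Germ (nhds x₀) ℂ | ∃ ζ : ℂ, ζ ^ k = 1 ∧
        g = ↑(fun x : ℂ => ζ * f x)} ∧
    {g : Filter.Germ (nhds x₀) ℂ |
        ContinuationGerm ({c}ᶜ) f (Metric.ball x₀ r) x₀ g}.ncard = k ∧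
    ∀ g ∈ {g : Filter.Germ (nhds x₀) ℂ |
        ContinuationGerm ({c}ᶜ) f (Metric.ball x₀ r) x₀ g},
      g ^ k = ↑(fun x : ℂ => c - x) := by
  have hk0 : k ≠ 0 := by omega
  have hxm : x₀ ∈ ball x₀ r := mem_ball_self hr
  have hf0 : ∀ x ∈ ball x₀ r, f x ≠ 0 := by
    intro x hx h
    have h1 := hfk x hx
    rw [h, zero_pow hk0] at h1
    exact hD hx (sub_eq_zero.1 h1.symm).symm
  have hprim := Complex.isPrimitiveRoot_exp k hk0
  have main : {g : Filter.Germ (nhds x₀) ℂ |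
        ContinuationGerm ({c}ᶜ) f (Metric.ball x₀ r) x₀ g} =
      {g : Filter.Germ (nhds x₀) ℂ | ∃ ζ : ℂ, ζ ^ k = 1 ∧
        g = ↑(fun x : ℂ => ζ * f x)} := by
    ext g
    constructor
    · rintro ⟨n, D, F, hD0, hF0, hDF, hch, hxl, rfl⟩
      have hpow := chain_pow k c n D F
        (fun x hx => by rw [hD0] at hx; rw [hF0 hx]; exact hfk x hx)
        (fun j => ⟨(hDF j).1, (hDF j).2.2⟩) hch (Fin.last n)
      obtain ⟨⟨p, s, hs, hp⟩, -, hdl⟩ := hDF (Fin.last n)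
      have hconv : IsPreconnected (ball x₀ r ∩ D (Fin.last n)) := by
        rw [hp]
        exact ((convex_ball x₀ r).inter (convex_ball p s)).isPreconnected
      obtain ⟨ζ, hζ, he⟩ := ratio_const k hk _ hconv (F (Fin.last n)) f
        (hdl.continuousOn.mono inter_subset_right) (hf.continuousOn.mono inter_subset_left)
        (fun x hx => by rw [hpow x hx.2, hfk x hx.1]) (fun x hx => hf0 x hx.1) x₀ ⟨hxm, hxl⟩
      refine ⟨ζ, hζ, Filter.Germ.coe_eq.2 ?_⟩
      have ho : IsOpen (ball x₀ r ∩ D (Fin.last n)) := by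
        rw [hp]
        exact isOpen_ball.inter isOpen_ball
      filter_upwards [ho.mem_nhds ⟨hxm, hxl⟩] with x hx
      exact he x hx
    · rintro ⟨ζ, hζ, rfl⟩
      have hnz : NeZero k := ⟨hk0⟩
      obtain ⟨m, -, rfl⟩ := hprim.eq_pow_of_pow_eq_one hζ
      have hrle : r ≤ ‖x₀ - c‖ := by
        by_contra hlt
        push Not at hlt
        have : c ∈ ball x₀ r := by rwa [mem_ball, dist_comm, dist_eq_norm]
        exact hD this rfl
      have hsub : ball x₀ r ⊆ dsk c x₀ 0 := by
        have : dsk c x₀ 0 = ball x₀ ‖x₀ - c‖ := by simp [dsk]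
        rw [this]
        exact ball_subset_ball hrle
      have hbx : br k c x₀ (f x₀) 0 x₀ = f x₀ := by
        simp [br, div_self (sub_ne_zero.2 hx₀)]
      have hbr : ∀ x ∈ ball x₀ r, br k c x₀ (f x₀) 0 x = f x := by
        obtain ⟨ξ, -, he⟩ := ratio_const k hk _ (convex_ball x₀ r).isPreconnected
          (br k c x₀ (f x₀) 0) f ((br_diff hx₀ k (f x₀) 0).continuousOn.mono hsub)
          hf.continuousOn
          (fun x hx => by rw [br_zero_pow hx₀ k hk _ (hfk x₀ hxm) x (hD hx), hfk x hx])
          hf0 x₀ hxm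
        have h1 := he x₀ hxm
        rw [hbx] at h1
        have h2 : ξ = 1 := (mul_eq_right₀ (hf0 x₀ hxm)).1 h1.symm
        intro x hx
        rw [he x hx, h2, one_mul]
      refine ⟨4 * m + 1, fun j => if j.val = 0 then ball x₀ r else dsk c x₀ (j.val - 1),
        fun j => br k c x₀ (f x₀) (j.val - 1), by simp, fun x hx => hbr x hx, ?_, ?_, ?_, ?_⟩
      · intro j
        by_cases hj : j.val = 0
        · simp only [hj, if_true]
          exact ⟨⟨x₀, r, hr, rfl⟩, hD, (br_diff hx₀ k (f x₀) 0).mono hsub⟩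
        · simp only [hj, if_false]
          exact ⟨⟨_, _, norm_pos_iff.2 (sub_ne_zero.2 hx₀), rfl⟩, dsk_sub hx₀ _,
            br_diff hx₀ k (f x₀) _⟩
      · intro j
        obtain ⟨j, hj⟩ := j
        cases j with
        | zero =>
          simp only [Fin.castSucc_mk, Fin.succ_mk, if_true]
          exact ⟨⟨x₀, hxm, hsub hxm⟩, fun x _ => rfl⟩
        | succ j =>
          simp only [Fin.castSucc_mk, Fin.succ_mk, Nat.add_eq_zero_iff, one_ne_zero, and_false,
            if_false, Nat.add_sub_cancel]
          exact ⟨dsk_inter hx₀ j, br_step hx₀ k (f x₀) j⟩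
      · have : dsk c x₀ (4 * m) = dsk c x₀ 0 := by
          simp [dsk, pow_mul, Complex.I_pow_four]
        simp only [Fin.val_last, Nat.add_eq_zero_iff, one_ne_zero, and_false, if_false,
          Nat.add_sub_cancel, this]
        exact hsub hxm
      · refine Filter.Germ.coe_eq.2 ?_
        filter_upwards [isOpen_ball.mem_nhds hxm] with x hx
        simp only [Fin.val_last, Nat.add_sub_cancel]
        rw [br_turn, hbr x hx]
  refine ⟨main, ?_, ?_⟩
  · rw [main]
    have himg : {g : Filter.Germ (nhds x₀) ℂ | ∃ ζ : ℂ, ζ ^ k = 1 ∧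
        g = ↑(fun x : ℂ => ζ * f x)} =
        (fun ζ : ℂ => ((fun x : ℂ => ζ * f x : ℂ → ℂ) : Filter.Germ (nhds x₀) ℂ)) ''
          (Polynomial.nthRootsFinset k (1 : ℂ) : Set ℂ) := by
      ext g
      simp only [mem_setOf_eq, mem_image, Finset.mem_coe,
        Polynomial.mem_nthRootsFinset (show 0 < k by omega)]
      exact exists_congr fun ζ => and_congr_right fun _ => eq_comm
    rw [himg, ncard_image_of_injOn, ncard_coe_finset, hprim.card_nthRootsFinset]
    intro a _ b _ hab
    have h1 := (Filter.Germ.coe_eq.1 hab).eq_of_nhds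
    exact mul_right_cancel₀ (hf0 x₀ hxm) h1
  · rw [main]
    rintro g ⟨ζ, hζ, rfl⟩
    rw [← Filter.Germ.coe_pow]
    refine Filter.Germ.coe_eq.2 ?_
    filter_upwards [isOpen_ball.mem_nhds hxm] with x hx
    rw [Pi.pow_apply, mul_pow, hζ, one_mul, hfk x hx]
end

section
/- Let ζ₁, ζ₂, ζ₃ ∈ ℂ be pairwise distinct, let α₁, α₂, α₃ ∈ ℂ, set Ω := ℂ ∖ {ζ₁, ζ₂, ζ₃}, let x₀ ∈ Ω, and let f be a holomorphic function on an open disk D₀ ⊆ Ω centered at x₀ satisfying f′(x) = α₁/(x−ζ₁) + α₂/(x−ζ₂) + α₃/(x−ζ₃) on D₀. Then the set of germs at x₀ obtained from f by analytic continuation along a chain of disks in Ω is exactly { germ at x₀ of f + 2πi·(n₁α₁ + n₂α₂ + n₃α₃) : n₁, n₂, n₃ ∈ ℤ }; in other words, two determinations of f over x₀ differ by a constant belonging to the additive group G = 2πi(α₁ℤ + α₂ℤ + α₃ℤ), and every element of G is realized by some continuation. -/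
open Filter Metric Set

namespace MonoAux

lemma eqOn_of_hasDeriv {U : Set ℂ} (hU : IsOpen U) (hc : IsPreconnected U) {ω F G : ℂ → ℂ}
    (hF : ∀ z ∈ U, HasDerivAt F (ω z) z) (hG : ∀ z ∈ U, HasDerivAt G (ω z) z)
    {p : ℂ} (hp : p ∈ U) (h : F p = G p) : Set.EqOn F G U := by
  intro y hy
  have hd : ∀ z ∈ U, HasDerivAt (fun z => F z - G z) 0 z := fun z hz => by
    have h0 := (hF z hz).sub (hG z hz)
    rw [sub_self] at h0
    exact h0
  have := hU.is_const_of_deriv_eq_zero hc (f := fun z => F z - G z)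
    (fun z hz => (hd z hz).differentiableAt.differentiableWithinAt)
    (fun z hz => (hd z hz).deriv) hy hp
  simp only [h, sub_self] at this
  exact sub_eq_zero.mp this

/-- local branch of the logarithm of `(x-ζ)/(c-ζ)` -/
noncomputable def lg (c ζ x : ℂ) : ℂ := Complex.log ((x - ζ) / (c - ζ))

lemma ratio_mem {c ζ x : ℂ} {r : ℝ} (hζ : ζ ∉ ball c r) (hx : x ∈ ball c r) :
    (x - ζ) / (c - ζ) ∈ Complex.slitPlane ∧ x - ζ ≠ 0 ∧ c - ζ ≠ 0 := by
  have hr : 0 < r := lt_of_le_of_lt dist_nonneg hx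
  have hcz : c - ζ ≠ 0 := by
    intro h
    rw [sub_eq_zero] at h
    subst h
    exact hζ (mem_ball_self hr)
  have hxz : x - ζ ≠ 0 := by
    intro h
    rw [sub_eq_zero] at h
    subst h
    exact hζ hx
  refine ⟨Complex.ball_one_subset_slitPlane ?_, hxz, hcz⟩
  rw [mem_ball, dist_eq_norm]
  have h1 : (x - ζ) / (c - ζ) - 1 = (x - c) / (c - ζ) := by field_simp; ring
  rw [h1, norm_div, div_lt_one (norm_pos_iff.mpr hcz)]
  have h2 : ‖x - c‖ < r := by simpa [dist_eq_norm] using hx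
  have h3 : r ≤ ‖c - ζ‖ := by simpa [dist_eq_norm, norm_sub_rev] using hζ
  linarith

lemma lg_deriv {c ζ x : ℂ} {r : ℝ} (hζ : ζ ∉ ball c r) (hx : x ∈ ball c r) :
    HasDerivAt (lg c ζ) (1 / (x - ζ)) x := by
  obtain ⟨h1, h2, h3⟩ := ratio_mem hζ hx
  have := (((hasDerivAt_id x).sub_const ζ).div_const (c - ζ)).clog h1
  convert! this using 1
  simp only [id]
  field_simp

lemma lg_exp {c ζ x : ℂ} {r : ℝ} (hζ : ζ ∉ ball c r) (hx : x ∈ ball c r) :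
    Complex.exp (lg c ζ x) = (x - ζ) / (c - ζ) := by
  obtain ⟨h1, h2, h3⟩ := ratio_mem hζ hx
  exact Complex.exp_log (div_ne_zero h2 h3)

/-- one step of the continuation, recorded by base points and values -/
def PStep (Ω : Set ℂ) (ω : ℂ → ℂ) (p q : ℂ × ℂ) : Prop :=
  ∃ (c : ℂ) (r : ℝ) (F : ℂ → ℂ), 0 < r ∧ ball c r ⊆ Ω ∧ p.1 ∈ ball c r ∧ q.1 ∈ ball c r ∧
    (∀ z ∈ ball c r, HasDerivAt F (ω z) z) ∧ F p.1 = p.2 ∧ F q.1 = q.2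

abbrev Reach (Ω : Set ℂ) (ω : ℂ → ℂ) : ℂ × ℂ → ℂ × ℂ → Prop := Relation.ReflTransGen (PStep Ω ω)

lemma reach_symm {Ω : Set ℂ} {ω : ℂ → ℂ} {p q : ℂ × ℂ} (h : Reach Ω ω p q) : Reach Ω ω q p := by
  induction h with
  | refl => exact Relation.ReflTransGen.refl
  | tail _ hs ih =>
    obtain ⟨c, r, F, hr, hb, hp, hq, hF, h1, h2⟩ := hs
    exact Relation.ReflTransGen.head ⟨c, r, F, hr, hb, hq, hp, hF, h2, h1⟩ ih

lemma reach_shift {Ω : Set ℂ} {ω : ℂ → ℂ} {p q : ℂ × ℂ} (h : Reach Ω ω p q) (k : ℂ) :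
    Reach Ω ω (p.1, p.2 + k) (q.1, q.2 + k) := by
  refine Relation.ReflTransGen.lift (fun p : ℂ × ℂ => (p.1, p.2 + k)) ?_ _ _ h
  rintro p q ⟨c, r, F, hr, hb, hp, hq, hF, h1, h2⟩
  exact ⟨c, r, fun z => F z + k, hr, hb, hp, hq, fun z hz => (hF z hz).add_const k,
    by simp [h1], by simp [h2]⟩

lemma reach_conn {Ω : Set ℂ} {ω : ℂ → ℂ} (ho : IsOpen Ω) (hc : IsPreconnected Ω)
    (hprim : ∀ c r, 0 < r → ball c r ⊆ Ω → ∃ F : ℂ → ℂ, ∀ z ∈ ball c r, HasDerivAt F (ω z) z)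
    {x y : ℂ} (hx : x ∈ Ω) (hy : y ∈ Ω) : ∃ v, Reach Ω ω (x, 0) (y, v) := by
  refine hc.induction₂ (fun x y => ∃ v, Reach Ω ω (x, 0) (y, v)) ?_ ?_ ?_ hx hy
  · intro x hx
    obtain ⟨r, hr, hb⟩ := Metric.isOpen_iff.mp ho x hx
    obtain ⟨F, hF⟩ := hprim x r hr hb
    filter_upwards [mem_nhdsWithin_of_mem_nhds (ball_mem_nhds x hr)] with y hy
    refine ⟨F y - F x, Relation.ReflTransGen.single ⟨x, r, fun z => F z - F x, hr, hb,
      mem_ball_self hr, hy, fun z hz => (hF z hz).sub_const _, by simp, by simp⟩⟩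
  · rintro x y z - - - ⟨v, hv⟩ ⟨w, hw⟩
    refine ⟨w + v, hv.trans ?_⟩
    simpa using reach_shift hw v
  · rintro x y - - ⟨v, hv⟩
    refine ⟨-v, reach_symm ?_⟩
    simpa using reach_shift hv (-v)

lemma reach_circle {Ω : Set ℂ} {ω H : ℂ → ℂ} {ζ α : ℂ} {ρ : ℝ} (hρ : 0 < ρ)
    (hΩ : ∀ z ∈ ball ζ (2 * ρ), z ≠ ζ → z ∈ Ω)
    (hH : ∀ z ∈ ball ζ (2 * ρ), z ≠ ζ → HasDerivAt H (ω z - α / (z - ζ)) z) :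
    ∃ v, Reach Ω ω (ζ + ρ, v) (ζ + ρ, v + 2 * Real.pi * Complex.I * α) := by
  let γ : ℝ → ℂ := fun t => ζ + ρ * Complex.exp (t * Complex.I)
  let Φ : ℝ → ℂ := fun t => α * (t * Complex.I) + H (γ t)
  have hγ : Continuous γ := by fun_prop
  have key : Reach Ω ω (γ 0, Φ 0) (γ (2 * Real.pi), Φ (2 * Real.pi)) := by
    refine (isPreconnected_univ (α := ℝ)).induction₂
      (fun s t => Reach Ω ω (γ s, Φ s) (γ t, Φ t)) ?_ ?_ ?_ (mem_univ _) (mem_univ _)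
    · intro t _
      rw [nhdsWithin_univ]
      have e1 : ∀ᶠ s in nhds t, γ s ∈ ball (γ t) ρ :=
        hγ.continuousAt.eventually (ball_mem_nhds _ hρ)
      have e2 : ∀ᶠ s in nhds t, s ∈ ball t 1 := ball_mem_nhds _ one_pos
      have hnorm : dist (γ t) ζ = ρ := by
        simp [γ, dist_eq_norm, Complex.norm_exp_ofReal_mul_I, abs_of_pos hρ]
      have hζ : ζ ∉ ball (γ t) ρ := by
        rw [mem_ball, dist_comm, hnorm]; exact lt_irrefl _
      have hsub : ∀ z ∈ ball (γ t) ρ, z ∈ ball ζ (2 * ρ) ∧ z ≠ ζ := by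
        intro z hz
        refine ⟨?_, fun h => hζ (h ▸ hz)⟩
        rw [mem_ball] at hz ⊢
        have := dist_triangle z (γ t) ζ
        linarith
      filter_upwards [e1, e2] with s hs1 hs2
      refine Relation.ReflTransGen.single ⟨γ t, ρ,
        fun z => α * (lg (γ t) ζ z + t * Complex.I) + H z, hρ,
        fun z hz => hΩ z (hsub z hz).1 (hsub z hz).2, mem_ball_self hρ, hs1, ?_, ?_, ?_⟩
      · intro z hz
        have := (((lg_deriv hζ hz).add_const (t * Complex.I)).const_mul α).add
          (hH z (hsub z hz).1 (hsub z hz).2)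
        convert! this using 1
        ring
      · have : γ t - ζ ≠ 0 := (ratio_mem hζ (mem_ball_self hρ)).2.2
        simp [lg, this, Φ]
      · have hρ' : (ρ : ℂ) ≠ 0 := by exact_mod_cast hρ.ne'
        have : (γ s - ζ) / (γ t - ζ) = Complex.exp (((s - t : ℝ) : ℂ) * Complex.I) := by
          simp only [γ, add_sub_cancel_left]
          rw [mul_div_mul_left _ _ hρ', ← Complex.exp_sub]
          congr 1
          push_cast
          ring
        have hst : |s - t| < 1 := by simpa [Real.dist_eq] using hs2
        have hpi := Real.pi_gt_three
        rw [abs_lt] at hst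
        have hl : lg (γ t) ζ (γ s) = ((s - t : ℝ) : ℂ) * Complex.I := by
          rw [lg, this, Complex.log_exp]
          · simp; linarith
          · simp; linarith
        simp only [hl, Φ]
        push_cast
        ring
    · intro x y z _ _ _ h1 h2
      exact h1.trans h2
    · intro x y _ _ h
      exact reach_symm h
  have g0 : γ 0 = ζ + ρ := by simp [γ]
  have g1 : γ (2 * Real.pi) = ζ + ρ := by simp [γ]
  refine ⟨H (ζ + ρ), ?_⟩
  simp only [Φ, g0, g1] at key
  convert! key using 2
  · simp
  · push_cast
    ring

/-- the chain of disks extracted from a sequence of steps -/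
lemma chain_of_reach {Ω : Set ℂ} {ω f : ℂ → ℂ} {x₀ : ℂ} {r : ℝ} (hr : 0 < r)
    (hD : ball x₀ r ⊆ Ω) (hf : ∀ z ∈ ball x₀ r, HasDerivAt f (ω z) z) {q : ℂ × ℂ}
    (h : Reach Ω ω (x₀, f x₀) q) :
    ∃ (n : ℕ) (D : Fin (n + 1) → Set ℂ) (F : Fin (n + 1) → ℂ → ℂ),
    D 0 = ball x₀ r ∧ Set.EqOn (F 0) f (ball x₀ r) ∧
    (∀ k, (∃ c : ℂ, ∃ r : ℝ, 0 < r ∧ D k = Metric.ball c r) ∧ D k ⊆ Ω ∧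
      DifferentiableOn ℂ (F k) (D k)) ∧
    (∀ k : Fin n, (D k.castSucc ∩ D k.succ).Nonempty ∧
      Set.EqOn (F k.castSucc) (F k.succ) (D k.castSucc ∩ D k.succ)) ∧
    q.1 ∈ D (Fin.last n) ∧ F (Fin.last n) q.1 = q.2 ∧
    ∀ z ∈ D (Fin.last n), HasDerivAt (F (Fin.last n)) (ω z) z := by
  induction h with
  | refl =>
    refine ⟨0, fun _ => ball x₀ r, fun _ => f, rfl, fun _ _ => rfl, fun k => ⟨⟨x₀, r, hr, rfl⟩, hD,
      fun z hz => (hf z hz).differentiableAt.differentiableWithinAt⟩, fun k => k.elim0,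
      mem_ball_self hr, rfl, hf⟩
  | @tail p q _ hs ih =>
    obtain ⟨n, D, F, h0, h1, h2, h3, h4, h5, h6⟩ := ih
    obtain ⟨c, s, G, hs, hb, hp, hq, hG, hGp, hGq⟩ := hs
    obtain ⟨⟨c', s', hs', hD'⟩, -, -⟩ := h2 (Fin.last n)
    refine ⟨n + 1, Fin.snoc (α := fun _ => Set ℂ) D (ball c s),
      Fin.snoc (α := fun _ => ℂ → ℂ) F G, ?_, ?_, ?_, ?_, ?_, ?_, ?_⟩
    · rw [Fin.snoc_apply_zero]; exact h0
    · rw [Fin.snoc_apply_zero]; exact h1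
    · intro k
      refine Fin.lastCases ?_ (fun k => ?_) k
      · simp only [Fin.snoc_last]
        exact ⟨⟨c, s, hs, rfl⟩, hb, fun z hz => (hG z hz).differentiableAt.differentiableWithinAt⟩
      · simp only [Fin.snoc_castSucc]
        exact h2 k
    · intro k
      refine Fin.lastCases ?_ (fun k => ?_) k
      · simp only [Fin.succ_last, Fin.snoc_last, Fin.snoc_castSucc]
        refine ⟨⟨p.1, h4, hp⟩, ?_⟩
        refine eqOn_of_hasDeriv (ω := ω) (p := p.1) ?_ ?_ (fun z hz => h6 z hz.1)
          (fun z hz => hG z hz.2) ⟨h4, hp⟩ (h5.trans hGp.symm)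
        · rw [hD']; exact isOpen_ball.inter isOpen_ball
        · rw [hD']; exact ((convex_ball _ _).inter (convex_ball _ _)).isPreconnected
      · simp only [Fin.succ_castSucc, Fin.snoc_castSucc]
        exact h3 k
    · simpa only [Fin.snoc_last] using hq
    · simpa only [Fin.snoc_last] using hGq
    · simpa only [Fin.snoc_last] using hG

section three

variable (ζ₁ ζ₂ ζ₃ α₁ α₂ α₃ : ℂ)

/-- the logarithmic form -/
noncomputable def om (x : ℂ) : ℂ := α₁ / (x - ζ₁) + α₂ / (x - ζ₂) + α₃ / (x - ζ₃)

/-- primitive on a disk with centre `c` -/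
noncomputable def prim (c x : ℂ) : ℂ := α₁ * lg c ζ₁ x + α₂ * lg c ζ₂ x + α₃ * lg c ζ₃ x

/-- values of determinations (with constant `K`) at `x` -/
def Val (K x v : ℂ) : Prop := ∃ l₁ l₂ l₃ : ℂ, Complex.exp l₁ = x - ζ₁ ∧ Complex.exp l₂ = x - ζ₂ ∧
  Complex.exp l₃ = x - ζ₃ ∧ v = α₁ * l₁ + α₂ * l₂ + α₃ * l₃ + K

variable {ζ₁ ζ₂ ζ₃ α₁ α₂ α₃}

lemma not_mem_of {c : ℂ} {r : ℝ} (hb : ball c r ⊆ ({ζ₁, ζ₂, ζ₃}ᶜ : Set ℂ)) :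
    ζ₁ ∉ ball c r ∧ ζ₂ ∉ ball c r ∧ ζ₃ ∉ ball c r :=
  ⟨fun h => hb h (by simp), fun h => hb h (by simp), fun h => hb h (by simp)⟩

lemma prim_deriv {c : ℂ} {r : ℝ} (hb : ball c r ⊆ ({ζ₁, ζ₂, ζ₃}ᶜ : Set ℂ)) :
    ∀ z ∈ ball c r, HasDerivAt (prim ζ₁ ζ₂ ζ₃ α₁ α₂ α₃ c) (om ζ₁ ζ₂ ζ₃ α₁ α₂ α₃ z) z := by
  intro z hz
  obtain ⟨h1, h2, h3⟩ := not_mem_of hb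
  have := (((lg_deriv h1 hz).const_mul α₁).add ((lg_deriv h2 hz).const_mul α₂)).add
    ((lg_deriv h3 hz).const_mul α₃)
  convert! this using 1
  simp only [om]
  ring

lemma lift_exp {c ζ x p l : ℂ} {r : ℝ} (hζ : ζ ∉ ball c r) (hx : x ∈ ball c r) (hp : p ∈ ball c r)
    (hl : Complex.exp l = p - ζ) : Complex.exp (lg c ζ x - lg c ζ p + l) = x - ζ := by
  obtain ⟨-, h2, h3⟩ := ratio_mem hζ hp
  rw [Complex.exp_add, Complex.exp_sub, lg_exp hζ hx, lg_exp hζ hp, hl]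
  field_simp

lemma val_ball {c K p : ℂ} {r : ℝ} (hb : ball c r ⊆ ({ζ₁, ζ₂, ζ₃}ᶜ : Set ℂ)) {F : ℂ → ℂ}
    (hF : ∀ z ∈ ball c r, HasDerivAt F (om ζ₁ ζ₂ ζ₃ α₁ α₂ α₃ z) z) (hp : p ∈ ball c r)
    (hv : Val ζ₁ ζ₂ ζ₃ α₁ α₂ α₃ K p (F p)) :
    ∀ x ∈ ball c r, Val ζ₁ ζ₂ ζ₃ α₁ α₂ α₃ K x (F x) := by
  intro x hx
  obtain ⟨l₁, l₂, l₃, e1, e2, e3, e⟩ := hv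
  obtain ⟨h1, h2, h3⟩ := not_mem_of hb
  refine ⟨_, _, _, lift_exp h1 hx hp e1, lift_exp h2 hx hp e2, lift_exp h3 hx hp e3, ?_⟩
  have := eqOn_of_hasDeriv isOpen_ball (convex_ball c r).isPreconnected hF
    (G := fun z => prim ζ₁ ζ₂ ζ₃ α₁ α₂ α₃ c z + (F p - prim ζ₁ ζ₂ ζ₃ α₁ α₂ α₃ c p))
    (fun z hz => (prim_deriv hb z hz).add_const _) hp (by ring) hx
  rw [this, e]
  simp only [prim]
  ring

lemma loop_at {Ω : Set ℂ} {ω : ℂ → ℂ} {ζ ξ η α β γ : ℂ} (h1 : ζ ≠ ξ) (h2 : ζ ≠ η)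
    (hΩ : ∀ z, z ≠ ζ → z ≠ ξ → z ≠ η → z ∈ Ω) (ho : IsOpen Ω) (hc : IsPreconnected Ω)
    (hprim : ∀ c r, 0 < r → ball c r ⊆ Ω → ∃ F : ℂ → ℂ, ∀ z ∈ ball c r, HasDerivAt F (ω z) z)
    (hω : ∀ z, ω z = α / (z - ζ) + β / (z - ξ) + γ / (z - η)) {x : ℂ} (hx : x ∈ Ω) (v : ℂ) :
    Reach Ω ω (x, v) (x, v + 2 * Real.pi * Complex.I * α) := by
  obtain ⟨ρ, hρ, hξ, hη⟩ : ∃ ρ : ℝ, 0 < ρ ∧ ξ ∉ ball ζ (2 * ρ) ∧ η ∉ ball ζ (2 * ρ) := by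
    have d1 := dist_pos.mpr h1.symm
    have d2 := dist_pos.mpr h2.symm
    have d3 := lt_min d1 d2
    refine ⟨min (dist ξ ζ) (dist η ζ) / 2, by linarith, ?_, ?_⟩
    · rw [mem_ball, not_lt]
      linarith [min_le_left (dist ξ ζ) (dist η ζ)]
    · rw [mem_ball, not_lt]
      linarith [min_le_right (dist ξ ζ) (dist η ζ)]
  have hsub : ∀ z ∈ ball ζ (2 * ρ), z ≠ ζ → z ∈ Ω := fun z hz hne =>
    hΩ z hne (fun h => hξ (h ▸ hz)) (fun h => hη (h ▸ hz))
  obtain ⟨w, hw⟩ := reach_circle (Ω := Ω) (ω := ω) (α := α)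
    (H := fun z => β * lg ζ ξ z + γ * lg ζ η z) hρ hsub (by
      intro z hz _
      have := ((lg_deriv hξ hz).const_mul β).add ((lg_deriv hη hz).const_mul γ)
      convert! this using 1
      rw [hω]
      ring)
  have hmem : ζ + ρ ∈ Ω := by
    refine hsub _ ?_ ?_
    · simp [dist_eq_norm, abs_of_pos hρ]; linarith
    · simp [hρ.ne']
  obtain ⟨u, hu⟩ := reach_conn ho hc hprim hx hmem
  have a1 := reach_shift hu v
  have a2 := reach_shift hw (u + v - w)
  have a3 := reach_symm (reach_shift hu (v + 2 * Real.pi * Complex.I * α))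
  simp only [zero_add] at a1 a3
  refine a1.trans (Relation.ReflTransGen.trans ?_ a3)
  convert! a2 using 2 <;> ring

lemma zloop {Ω : Set ℂ} {ω : ℂ → ℂ} {x k : ℂ} (h : ∀ v, Reach Ω ω (x, v) (x, v + k)) (n : ℤ)
    (v : ℂ) : Reach Ω ω (x, v) (x, v + n * k) := by
  induction n using Int.induction_on generalizing v with
  | zero => simpa using Relation.ReflTransGen.refl
  | succ n ih =>
    refine (ih v).trans ?_
    convert! h _ using 2
    push_cast
    ring
  | pred n ih =>
    refine (ih v).trans (reach_symm ?_)
    convert! h _ using 2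
    push_cast
    ring

end three

end MonoAux

/-- **Monodromy of `α₁ log(x−ζ₁) + α₂ log(x−ζ₂) + α₃ log(x−ζ₃)`.**
Let `f` be holomorphic on a disk `D₀ ⊆ Ω := ℂ ∖ {ζ₁,ζ₂,ζ₃}` centered at `x₀` with
`f′(x) = α₁/(x−ζ₁) + α₂/(x−ζ₂) + α₃/(x−ζ₃)`.  The germs at `x₀` obtained from `f` by
analytic continuation along chains of disks in `Ω` are exactly the germs of
`f + 2πi(n₁α₁ + n₂α₂ + n₃α₃)`, `n₁, n₂, n₃ ∈ ℤ`: two determinations differ by a constant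
in the group `G = 2πi(α₁ℤ + α₂ℤ + α₃ℤ)` and every element of `G` is realized. -/
theorem monodromy_three_logs (ζ₁ ζ₂ ζ₃ : ℂ)
    (h₁₂ : ζ₁ ≠ ζ₂) (h₁₃ : ζ₁ ≠ ζ₃) (h₂₃ : ζ₂ ≠ ζ₃)
    (α₁ α₂ α₃ : ℂ) (x₀ : ℂ) (hx₀ : x₀ ∈ ({ζ₁, ζ₂, ζ₃}ᶜ : Set ℂ))
    (r : ℝ) (hr : 0 < r) (hD : Metric.ball x₀ r ⊆ ({ζ₁, ζ₂, ζ₃}ᶜ : Set ℂ))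
    (f : ℂ → ℂ) (hf : DifferentiableOn ℂ f (Metric.ball x₀ r))
    (hderiv : ∀ x ∈ Metric.ball x₀ r,
      deriv f x = α₁ / (x - ζ₁) + α₂ / (x - ζ₂) + α₃ / (x - ζ₃)) :
    {g : Filter.Germ (nhds x₀) ℂ |
        ContinuationGerm ({ζ₁, ζ₂, ζ₃}ᶜ) f (Metric.ball x₀ r) x₀ g} =
      {g : Filter.Germ (nhds x₀) ℂ | ∃ n₁ n₂ n₃ : ℤ,
        g = ↑(fun x : ℂ => f x +
          2 * Real.pi * Complex.I * (n₁ * α₁ + n₂ * α₂ + n₃ * α₃))} := by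
  set Ω : Set ℂ := {ζ₁, ζ₂, ζ₃}ᶜ with hΩdef
  let ω := MonoAux.om ζ₁ ζ₂ ζ₃ α₁ α₂ α₃
  have hfd : ∀ z ∈ ball x₀ r, HasDerivAt f (ω z) z := fun z hz => by
    have := (hf.differentiableAt (isOpen_ball.mem_nhds hz)).hasDerivAt
    rwa [hderiv z hz] at this
  ext g
  simp only [mem_ofPred_eq]
  constructor
  · rintro ⟨n, D, F, h0, h1, h2, h3, h4, rfl⟩
    have hne : ∀ ζ ∈ ({ζ₁, ζ₂, ζ₃} : Set ℂ), x₀ - ζ ≠ 0 := by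
      intro ζ hζ h
      rw [sub_eq_zero] at h
      exact hx₀ (h ▸ hζ)
    have n1 := hne ζ₁ (by simp)
    have n2 := hne ζ₂ (by simp)
    have n3 := hne ζ₃ (by simp)
    obtain ⟨K, hK⟩ : ∃ K, f x₀ = α₁ * Complex.log (x₀ - ζ₁) + α₂ * Complex.log (x₀ - ζ₂) +
      α₃ * Complex.log (x₀ - ζ₃) + K := ⟨f x₀ - (α₁ * Complex.log (x₀ - ζ₁) +
        α₂ * Complex.log (x₀ - ζ₂) + α₃ * Complex.log (x₀ - ζ₃)), by ring⟩
    have inv : ∀ k : Fin (n + 1), (∀ z ∈ D k, HasDerivAt (F k) (ω z) z) ∧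
        ∀ z ∈ D k, MonoAux.Val ζ₁ ζ₂ ζ₃ α₁ α₂ α₃ K z (F k z) := by
      intro k
      induction k using Fin.induction with
      | zero =>
        have hd : ∀ z ∈ ball x₀ r, HasDerivAt (F 0) (ω z) z := fun z hz =>
          (hfd z hz).congr_of_eventuallyEq (h1.eventuallyEq_of_mem (isOpen_ball.mem_nhds hz))
        rw [h0]
        refine ⟨hd, MonoAux.val_ball hD hd (mem_ball_self hr) ?_⟩
        rw [h1 (mem_ball_self hr)]
        exact ⟨_, _, _, Complex.exp_log n1, Complex.exp_log n2, Complex.exp_log n3, hK⟩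
      | succ k ih =>
        obtain ⟨ihd, ihv⟩ := ih
        obtain ⟨⟨p, hp, hp'⟩, heq⟩ := h3 k
        obtain ⟨⟨c, s, hs, hDk⟩, hsub, -⟩ := h2 k.castSucc
        obtain ⟨⟨c', s', hs', hDk'⟩, hsub', hdiff⟩ := h2 k.succ
        rw [hDk'] at hsub' hdiff hp' heq ⊢
        rw [hDk] at ihd ihv hp heq
        have hop : IsOpen (ball c s ∩ ball c' s') := isOpen_ball.inter isOpen_ball
        let G : ℂ → ℂ := fun z => MonoAux.prim ζ₁ ζ₂ ζ₃ α₁ α₂ α₃ c' z +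
          (F k.castSucc p - MonoAux.prim ζ₁ ζ₂ ζ₃ α₁ α₂ α₃ c' p)
        have hG : ∀ z ∈ ball c' s', HasDerivAt G (ω z) z := fun z hz =>
          (MonoAux.prim_deriv hsub' z hz).add_const _
        have hFG : Set.EqOn (F k.castSucc) G (ball c s ∩ ball c' s') :=
          MonoAux.eqOn_of_hasDeriv (ω := ω) hop
            ((convex_ball _ _).inter (convex_ball _ _)).isPreconnected
            (fun z hz => ihd z hz.1) (fun z hz => hG z hz.2) ⟨hp, hp'⟩ (by simp [G])
        have hFG' : Set.EqOn (F k.succ) G (ball c' s') := by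
          refine AnalyticOnNhd.eqOn_of_preconnected_of_eventuallyEq
            (hdiff.analyticOnNhd isOpen_ball)
            (DifferentiableOn.analyticOnNhd
              (fun z hz => (hG z hz).differentiableAt.differentiableWithinAt) isOpen_ball)
            (convex_ball _ _).isPreconnected hp' ?_
          filter_upwards [hop.mem_nhds ⟨hp, hp'⟩] with z hz
          rw [← heq hz, hFG hz]
        have hd : ∀ z ∈ ball c' s', HasDerivAt (F k.succ) (ω z) z := fun z hz =>
          (hG z hz).congr_of_eventuallyEq (hFG'.eventuallyEq_of_mem (isOpen_ball.mem_nhds hz))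
        refine ⟨hd, MonoAux.val_ball hsub' hd hp' ?_⟩
        rw [← heq ⟨hp, hp'⟩]
        exact ihv p hp
    obtain ⟨hd, hv⟩ := inv (Fin.last n)
    obtain ⟨l₁, l₂, l₃, e1, e2, e3, e⟩ := hv x₀ h4
    rw [← Complex.exp_log n1, Complex.exp_eq_exp_iff_exists_int] at e1
    rw [← Complex.exp_log n2, Complex.exp_eq_exp_iff_exists_int] at e2
    rw [← Complex.exp_log n3, Complex.exp_eq_exp_iff_exists_int] at e3
    obtain ⟨m₁, e1⟩ := e1
    obtain ⟨m₂, e2⟩ := e2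
    obtain ⟨m₃, e3⟩ := e3
    refine ⟨m₁, m₂, m₃, Filter.Germ.coe_eq.mpr ?_⟩
    obtain ⟨⟨c, s, hs, hDk⟩, -, -⟩ := h2 (Fin.last n)
    rw [hDk] at hd h4
    have hop : IsOpen (ball c s ∩ ball x₀ r) := isOpen_ball.inter isOpen_ball
    refine (MonoAux.eqOn_of_hasDeriv (ω := ω) hop
      ((convex_ball _ _).inter (convex_ball _ _)).isPreconnected
      (fun z hz => hd z hz.1) (fun z hz => (hfd z hz.2).add_const _)
      ⟨h4, mem_ball_self hr⟩ ?_).eventuallyEq_of_mem (hop.mem_nhds ⟨h4, mem_ball_self hr⟩)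
    rw [e, hK, e1, e2, e3]
    ring
  · rintro ⟨m₁, m₂, m₃, rfl⟩
    have hfin : ({ζ₁, ζ₂, ζ₃} : Set ℂ).Finite := by simp
    have ho : IsOpen Ω := hfin.isClosed.isOpen_compl
    have hc : IsPreconnected Ω := (hfin.countable.isConnected_compl_of_one_lt_rank
      (by simp [Complex.rank_real_complex])).isPreconnected
    have hprim : ∀ c r, 0 < r → ball c r ⊆ Ω →
        ∃ F : ℂ → ℂ, ∀ z ∈ ball c r, HasDerivAt F (ω z) z :=
      fun c r _ hb => ⟨_, MonoAux.prim_deriv hb⟩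
    have r1 := MonoAux.zloop (MonoAux.loop_at (Ω := Ω) (ω := ω) h₁₂ h₁₃
      (fun z a b c => by simp [hΩdef, a, b, c]) ho hc hprim (fun z => rfl) hx₀) m₁ (f x₀)
    have r2 := MonoAux.zloop (MonoAux.loop_at (Ω := Ω) (ω := ω) (α := α₂) (β := α₁) (γ := α₃) h₁₂.symm h₂₃
      (fun z a b c => by simp [hΩdef, a, b, c]) ho hc hprim
      (fun z => by simp only [ω, MonoAux.om]; ring) hx₀) m₂
    have r3 := MonoAux.zloop (MonoAux.loop_at (Ω := Ω) (ω := ω) (α := α₃) (β := α₁) (γ := α₂) h₁₃.symm h₂₃.symm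
      (fun z a b c => by simp [hΩdef, a, b, c]) ho hc hprim
      (fun z => by simp only [ω, MonoAux.om]; ring) hx₀) m₃
    obtain ⟨n, D, F, c0, c1, c2, c3, c4, c5, c6⟩ :=
      MonoAux.chain_of_reach hr hD hfd ((r1.trans (r2 _)).trans (r3 _))
    refine ⟨n, D, F, c0, c1, c2, c3, c4, Filter.Germ.coe_eq.mpr ?_⟩
    obtain ⟨⟨c, s, hs, hDk⟩, -, -⟩ := c2 (Fin.last n)
    rw [hDk] at c4 c6
    have hop : IsOpen (ball c s ∩ ball x₀ r) := isOpen_ball.inter isOpen_ball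
    refine Filter.EventuallyEq.symm ((MonoAux.eqOn_of_hasDeriv (ω := ω) hop
      ((convex_ball _ _).inter (convex_ball _ _)).isPreconnected
      (fun z hz => c6 z hz.1) (fun z hz => (hfd z hz.2).add_const _)
      ⟨c4, mem_ball_self hr⟩ ?_).eventuallyEq_of_mem (hop.mem_nhds ⟨c4, mem_ball_self hr⟩))
    rw [c5]
    ring
end

section
/- The map ψ(y) = y + Log(y), where Log denotes the principal branch of the complex logarithm (holomorphic on ℂ ∖ (−∞,0]), is a bijection from ℂ ∖ (−∞,0] onto ℂ ∖ ({z ∈ ℂ : Im z = π and Re z ≤ −1} ∪ {z ∈ ℂ : Im z = −π and Re z ≤ −1}). -/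
namespace PsiAux

open Filter Topology

/-- The modulus on the level line `Im ψ = b`, as a function of the argument. -/
noncomputable def R (b t : ℝ) : ℝ := (b - t) / Real.sin t

/-- The real part of `ψ` on the level line `Im ψ = b`, as a function of the argument. -/
noncomputable def F (b t : ℝ) : ℝ := R b t * Real.cos t + Real.log (R b t)

lemma R_pos {b t : ℝ} (h0 : 0 < t) (hb : t < b) (hp : t < Real.pi) : 0 < R b t :=
  div_pos (sub_pos.2 hb) (Real.sin_pos_of_pos_of_lt_pi h0 hp)

lemma F_hasDerivAt {b t : ℝ} (h0 : 0 < t) (hb : t < b) (hp : t < Real.pi) :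
    HasDerivAt (F b) (-(((R b t * Real.cos t + 1) ^ 2 + (R b t * Real.sin t) ^ 2) / (b - t))) t := by
  have hs := Real.sin_pos_of_pos_of_lt_pi h0 hp
  have hr := R_pos h0 hb hp
  have hbt : 0 < b - t := sub_pos.2 hb
  have h1 : HasDerivAt (R b) (((-1) * Real.sin t - (b - t) * Real.cos t) / Real.sin t ^ 2) t :=
    ((hasDerivAt_id t).const_sub b).div (Real.hasDerivAt_sin t) hs.ne'
  have h2 := (h1.mul (Real.hasDerivAt_cos t)).add (h1.log hr.ne')
  refine h2.congr_deriv ?_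
  have hsc := Real.sin_sq_add_cos_sq t
  unfold R
  generalize Real.sin t = s at *
  generalize Real.cos t = c at *
  have hc : c ^ 2 = 1 - s ^ 2 := by linarith
  field_simp
  ring_nf

lemma F_anti (b : ℝ) : StrictAntiOn (F b) (Set.Ioo 0 (min b Real.pi)) := by
  apply strictAntiOn_of_hasDerivWithinAt_neg (convex_Ioo _ _)
    (f' := fun t => -(((R b t * Real.cos t + 1) ^ 2 + (R b t * Real.sin t) ^ 2) / (b - t)))
  · intro t ht
    obtain ⟨h0, h1⟩ := ht
    rw [lt_min_iff] at h1
    exact (F_hasDerivAt h0 h1.1 h1.2).continuousAt.continuousWithinAt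
  · intro t ht
    rw [interior_Ioo] at ht
    obtain ⟨h0, h1⟩ := ht
    rw [lt_min_iff] at h1
    exact (F_hasDerivAt h0 h1.1 h1.2).hasDerivWithinAt
  · intro t ht
    rw [interior_Ioo] at ht
    obtain ⟨h0, h1⟩ := ht
    rw [lt_min_iff] at h1
    have hs := Real.sin_pos_of_pos_of_lt_pi h0 h1.2
    have hr := R_pos h0 h1.1 h1.2
    have hbt : 0 < b - t := sub_pos.2 h1.1
    have : 0 < ((R b t * Real.cos t + 1) ^ 2 + (R b t * Real.sin t) ^ 2) / (b - t) := by
      positivity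
    linarith

lemma F_cont (b : ℝ) : ContinuousOn (F b) (Set.Ioo 0 (min b Real.pi)) := by
  intro t ht
  obtain ⟨h0, h1⟩ := ht
  rw [lt_min_iff] at h1
  exact (F_hasDerivAt h0 h1.1 h1.2).continuousAt.continuousWithinAt

lemma sin_tendsto_zero : Tendsto Real.sin (𝓝[>] 0) (𝓝[>] 0) := by
  rw [tendsto_nhdsWithin_iff]
  constructor
  · have := Real.continuous_sin.tendsto 0
    rw [Real.sin_zero] at this
    exact this.mono_left nhdsWithin_le_nhds
  · filter_upwards [Ioo_mem_nhdsGT Real.pi_pos] with t ht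
    exact Real.sin_pos_of_pos_of_lt_pi ht.1 ht.2

lemma sin_tendsto_pi : Tendsto Real.sin (𝓝[<] Real.pi) (𝓝[>] 0) := by
  rw [tendsto_nhdsWithin_iff]
  constructor
  · have := Real.continuous_sin.tendsto Real.pi
    rw [Real.sin_pi] at this
    exact this.mono_left nhdsWithin_le_nhds
  · filter_upwards [Ioo_mem_nhdsLT Real.pi_pos] with t ht
    exact Real.sin_pos_of_pos_of_lt_pi ht.1 ht.2

lemma cos_tendsto (x : ℝ) (s : Set ℝ) : Tendsto Real.cos (𝓝[s] x) (𝓝 (Real.cos x)) :=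
  (Real.continuous_cos.tendsto x).mono_left nhdsWithin_le_nhds

lemma sub_tendsto (b x : ℝ) (s : Set ℝ) : Tendsto (fun t => b - t) (𝓝[s] x) (𝓝 (b - x)) :=
  ((continuous_const.sub continuous_id).tendsto x).mono_left nhdsWithin_le_nhds

lemma F_zero {b : ℝ} (hb : 0 < b) : Tendsto (F b) (𝓝[>] 0) atTop := by
  have hR : Tendsto (R b) (𝓝[>] 0) atTop := by
    have h1 := (tendsto_inv_nhdsGT_zero (𝕜 := ℝ)).comp sin_tendsto_zero
    exact (sub_tendsto b 0 _).pos_mul_atTop (by simpa using hb) h1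
  have h2 := hR.atTop_mul_pos (by simp) (cos_tendsto 0 (Set.Ioi 0))
  exact h2.atTop_add_atTop (Real.tendsto_log_atTop.comp hR)

lemma F_low {b : ℝ} (hb : 0 < b) (hp : b < Real.pi) : Tendsto (F b) (𝓝[<] b) atBot := by
  have hs := Real.sin_pos_of_pos_of_lt_pi hb hp
  have hR : Tendsto (R b) (𝓝[<] b) (𝓝 0) := by
    have := (sub_tendsto b b (Set.Iio b)).div
      ((Real.continuous_sin.tendsto b).mono_left nhdsWithin_le_nhds) hs.ne'
    rw [sub_self, zero_div] at this
    exact this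
  have hR' : Tendsto (R b) (𝓝[<] b) (𝓝[>] 0) := by
    rw [tendsto_nhdsWithin_iff]
    refine ⟨hR, ?_⟩
    filter_upwards [Ioo_mem_nhdsLT hb] with t ht
    exact R_pos ht.1 ht.2 (ht.2.trans hp)
  exact (hR.mul (cos_tendsto b _)).add_atBot (Real.tendsto_log_nhdsGT_zero.comp hR')

lemma F_high {b : ℝ} (hp : Real.pi < b) : Tendsto (F b) (𝓝[<] Real.pi) atBot := by
  have hR : Tendsto (R b) (𝓝[<] Real.pi) atTop := by
    have h1 := (tendsto_inv_nhdsGT_zero (𝕜 := ℝ)).comp sin_tendsto_pi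
    exact (sub_tendsto b Real.pi _).pos_mul_atTop (by simpa using hp) h1
  have hl : Tendsto (fun x : ℝ => Real.log x / x) atTop (𝓝 0) :=
    Real.isLittleO_log_id_atTop.tendsto_div_nhds_zero
  have h2 := (cos_tendsto Real.pi (Set.Iio Real.pi)).add (hl.comp hR)
  have h3 := hR.atTop_mul_neg (by simp) h2
  refine h3.congr' ?_
  filter_upwards [Ioo_mem_nhdsLT Real.pi_pos] with t ht
  have := R_pos ht.1 (ht.2.trans hp) ht.2
  simp only [F, Function.comp]
  field_simp

lemma F_mid : Tendsto (F Real.pi) (𝓝[<] Real.pi) (𝓝 (-1)) := by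
  have hR : Tendsto (R Real.pi) (𝓝[<] Real.pi) (𝓝 1) := by
    have h := (Real.hasDerivAt_sin Real.pi).tendsto_slope
    have h' := (h.mono_left (nhdsWithin_mono Real.pi
      (fun x (hx : x < Real.pi) => (ne_of_lt hx : x ≠ Real.pi)))).inv₀ (by simp)
    have h2 := h'.neg
    simp only [Real.cos_pi, inv_neg, inv_one, neg_neg] at h2
    refine h2.congr ?_
    intro t
    rw [slope_def_field, Real.sin_pi, R, inv_div, sub_zero, ← neg_div, neg_sub]
  have := (hR.mul (cos_tendsto Real.pi (Set.Iio Real.pi))).add (hR.log one_ne_zero)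
  rw [Real.cos_pi, Real.log_one, one_mul, add_zero] at this
  exact this

lemma F_gt {t : ℝ} (h0 : 0 < t) (hp : t < Real.pi) : -1 < F Real.pi t := by
  obtain ⟨u, hu1, hu2⟩ := exists_between hp
  have hmem : ∀ x, 0 < x → x < Real.pi → x ∈ Set.Ioo 0 (min Real.pi Real.pi) := by
    intro x hx hx'; simpa using ⟨hx, hx'⟩
  have h1 := F_anti Real.pi (hmem t h0 hp) (hmem u (h0.trans hu1) hu2) hu1
  refine lt_of_le_of_lt ?_ h1
  refine le_of_tendsto F_mid ?_
  filter_upwards [Ioo_mem_nhdsLT hu2] with v hv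
  exact (F_anti Real.pi (hmem u (h0.trans hu1) hu2)
    (hmem v ((h0.trans hu1).trans hv.1) hv.2) hv.1).le

lemma F_surj {a b : ℝ} (hb : 0 < b) (h : ¬ (b = Real.pi ∧ a ≤ -1)) :
    ∃ t ∈ Set.Ioo 0 (min b Real.pi), F b t = a := by
  have hm : 0 < min b Real.pi := lt_min hb Real.pi_pos
  obtain ⟨t1, h1, h1'⟩ := (((F_zero hb).eventually_gt_atTop a).and (Ioo_mem_nhdsGT hm)).exists
  have : ∃ t2 ∈ Set.Ioo 0 (min b Real.pi), F b t2 < a := by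
    rcases lt_trichotomy b Real.pi with hlt | heq | hgt
    · rw [min_eq_left hlt.le]
      obtain ⟨t, h2, h3⟩ :=
        (((F_low hb hlt).eventually_lt_atBot a).and (Ioo_mem_nhdsLT hb)).exists
      exact ⟨t, h3, h2⟩
    · subst heq
      rw [min_self]
      have ha : -1 < a := by
        by_contra hc
        exact h ⟨rfl, not_lt.1 hc⟩
      obtain ⟨t, h2, h3⟩ :=
        ((F_mid.eventually_lt_const ha).and (Ioo_mem_nhdsLT Real.pi_pos)).exists
      exact ⟨t, h3, h2⟩
    · rw [min_eq_right hgt.le]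
      obtain ⟨t, h2, h3⟩ :=
        (((F_high hgt).eventually_lt_atBot a).and (Ioo_mem_nhdsLT Real.pi_pos)).exists
      exact ⟨t, h3, h2⟩
  obtain ⟨t2, h2, h2'⟩ := this
  exact isPreconnected_Ioo.intermediate_value h2 h1' (F_cont b) ⟨h2'.le, h1.le⟩

/-- The map `ψ`. -/
noncomputable def psi (y : ℂ) : ℂ := y + Complex.log y

lemma arg_mem {y : ℂ} (hy : 0 < y.im) : 0 < y.arg ∧ y.arg < Real.pi := by
  constructor
  · have h1 : 0 ≤ y.arg := Complex.arg_nonneg_iff.2 hy.le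
    refine lt_of_le_of_ne h1 fun h => ?_
    exact hy.ne' (Complex.arg_eq_zero_iff.1 h.symm).2.symm.symm
  · refine lt_of_le_of_ne (Complex.arg_le_pi y) fun h => ?_
    exact hy.ne' (Complex.arg_eq_pi_iff.1 h).2

lemma psi_im (y : ℂ) : (psi y).im = y.im + y.arg := by
  simp [psi, Complex.log_im]

lemma psi_upper {y : ℂ} (hy : 0 < y.im) :
    0 < (psi y).im ∧ y.arg ∈ Set.Ioo 0 (min (psi y).im Real.pi) ∧
      ‖y‖ = R (psi y).im y.arg ∧ F (psi y).im y.arg = (psi y).re := by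
  obtain ⟨h0, hp⟩ := arg_mem hy
  have hs := Real.sin_pos_of_pos_of_lt_pi h0 hp
  have hR : ‖y‖ = R (psi y).im y.arg := by
    rw [R, psi_im, add_sub_cancel_right, eq_div_iff hs.ne', Complex.norm_mul_sin_arg]
  refine ⟨by rw [psi_im]; linarith, ⟨h0, lt_min (by rw [psi_im]; linarith) hp⟩, hR, ?_⟩
  rw [F, ← hR, Complex.norm_mul_cos_arg]
  simp [psi, Complex.log_re]

lemma psi_upper_inj {y z : ℂ} (hy : 0 < y.im) (hz : 0 < z.im) (h : psi y = psi z) : y = z := by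
  obtain ⟨-, h1, h2, h3⟩ := psi_upper hy
  obtain ⟨-, k1, k2, k3⟩ := psi_upper hz
  rw [← h] at k1 k2 k3
  have harg := (F_anti _).injOn h1 k1 (h3.trans k3.symm)
  exact Complex.ext_norm_arg (by rw [h2, k2, harg]) harg

lemma psi_upper_not {y : ℂ} (hy : 0 < y.im) : ¬ ((psi y).im = Real.pi ∧ (psi y).re ≤ -1) := by
  rintro ⟨h, h'⟩
  obtain ⟨-, h1, h2, h3⟩ := psi_upper hy
  rw [h] at h3
  have := F_gt (arg_mem hy).1 (arg_mem hy).2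
  linarith

lemma psi_upper_surj {w : ℂ} (hw : 0 < w.im) (h : ¬ (w.im = Real.pi ∧ w.re ≤ -1)) :
    ∃ y : ℂ, 0 < y.im ∧ psi y = w := by
  obtain ⟨t, ⟨h0, h1⟩, ht⟩ := F_surj hw h
  rw [lt_min_iff] at h1
  have hs := Real.sin_pos_of_pos_of_lt_pi h0 h1.2
  have hr := R_pos h0 h1.1 h1.2
  set r := R w.im t with hrdef
  have harg : Complex.arg (r * (Complex.cos t + Complex.sin t * Complex.I)) = t :=
    Complex.arg_mul_cos_add_sin_mul_I hr ⟨by linarith [Real.pi_pos], h1.2.le⟩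
  have him : (r * (Complex.cos t + Complex.sin t * Complex.I) : ℂ).im = r * Real.sin t := by
    simp [← Complex.ofReal_cos, ← Complex.ofReal_sin]
  have hre : (r * (Complex.cos t + Complex.sin t * Complex.I) : ℂ).re = r * Real.cos t := by
    simp [← Complex.ofReal_cos, ← Complex.ofReal_sin]
  have hn : ‖(r * (Complex.cos t + Complex.sin t * Complex.I) : ℂ)‖ = r := by
    rw [norm_mul, Complex.norm_cos_add_sin_mul_I]
    simp [abs_of_pos hr]
  refine ⟨r * (Complex.cos t + Complex.sin t * Complex.I), by rw [him]; positivity, ?_⟩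
  apply Complex.ext
  · rw [psi, Complex.add_re, Complex.log_re, hn, hre, ← ht, F]
  · rw [psi_im, him, harg, hrdef, R]
    field_simp
    ring

lemma psi_conj {y : ℂ} (hy : y ∈ Complex.slitPlane) :
    psi (starRingEnd ℂ y) = starRingEnd ℂ (psi y) := by
  rw [psi, psi, Complex.log_conj _ (Complex.mem_slitPlane_iff_arg.1 hy).1, map_add]

lemma slit_of_upper {y : ℂ} (hy : 0 < y.im) : y ∈ Complex.slitPlane := Or.inr hy.ne'

lemma slit_of_lower {y : ℂ} (hy : y.im < 0) : y ∈ Complex.slitPlane := Or.inr hy.ne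

lemma psi_real {y : ℂ} (hy : y ∈ Complex.slitPlane) (h : y.im = 0) :
    0 < y.re ∧ (psi y).im = 0 ∧ (psi y).re = y.re + Real.log y.re := by
  have hpos : 0 < y.re := by
    rcases hy with h1 | h1
    · exact h1
    · exact absurd h h1
  have hy' : y = (y.re : ℂ) := Complex.ext (by simp) (by simp [h])
  refine ⟨hpos, ?_, ?_⟩
  · rw [psi_im, h, Complex.arg_eq_zero_iff.2 ⟨hpos.le, h⟩, add_zero]
  · rw [psi, hy', ← Complex.ofReal_log (by simpa using hpos.le)]
    simp

lemma psi_lower {y : ℂ} (hy : y.im < 0) : (psi y).im < 0 := by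
  have := (psi_upper (y := starRingEnd ℂ y) (by simpa using hy)).1
  rw [psi_conj (slit_of_lower hy)] at this
  simpa using this

lemma real_anti : StrictMonoOn (fun x : ℝ => x + Real.log x) (Set.Ioi 0) := by
  intro x hx y _ hxy
  exact add_lt_add hxy (Real.log_lt_log hx hxy)

lemma real_surj (a : ℝ) : ∃ x : ℝ, 0 < x ∧ x + Real.log x = a := by
  have hc : ContinuousOn (fun x : ℝ => x + Real.log x) (Set.Ioi 0) :=
    continuousOn_id.add (Real.continuousOn_log.mono fun x hx => (ne_of_gt hx : x ≠ 0))
  have h1 : (fun x : ℝ => x + Real.log x) (Real.exp (a - 1 - |a|)) ≤ a := by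
    have : Real.exp (a - 1 - |a|) ≤ 1 := Real.exp_le_one_iff.2 (by linarith [le_abs_self a])
    simp only [Real.log_exp]
    linarith [abs_nonneg a]
  have h2 : a ≤ (fun x : ℝ => x + Real.log x) (Real.exp a) := by
    simp only [Real.log_exp]
    linarith [Real.exp_pos a]
  obtain ⟨x, hx, hxa⟩ := isPreconnected_Ioi.intermediate_value
    (Set.mem_Ioi.2 (Real.exp_pos _)) (Set.mem_Ioi.2 (Real.exp_pos _)) hc ⟨h1, h2⟩
  exact ⟨x, hx, hxa⟩

lemma psi_inj {y z : ℂ} (hy : y ∈ Complex.slitPlane) (hz : z ∈ Complex.slitPlane)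
    (h : psi y = psi z) : y = z := by
  have him := congrArg Complex.im h
  rcases lt_trichotomy y.im 0 with h1 | h1 | h1 <;> rcases lt_trichotomy z.im 0 with h2 | h2 | h2
  · have := psi_upper_inj (y := starRingEnd ℂ y) (z := starRingEnd ℂ z)
      (by simpa using h1) (by simpa using h2) (by rw [psi_conj hy, psi_conj hz, h])
    exact (starRingEnd ℂ).injective this
  · linarith [psi_lower h1, (psi_real hz h2).2.1]
  · linarith [psi_lower h1, (psi_upper h2).1]
  · linarith [psi_lower h2, (psi_real hy h1).2.1]
  · obtain ⟨p1, -, q1⟩ := psi_real hy h1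
    obtain ⟨p2, -, q2⟩ := psi_real hz h2
    refine Complex.ext (real_anti.injOn p1 p2 ?_) (h1.trans h2.symm)
    rw [h] at q1
    exact q1.symm.trans q2
  · linarith [(psi_upper h2).1, (psi_real hy h1).2.1]
  · linarith [psi_lower h2, (psi_upper h1).1]
  · linarith [(psi_upper h1).1, (psi_real hz h2).2.1]
  · exact psi_upper_inj h1 h2 h

end PsiAux

open PsiAux in
/-- **The conformal model of the holonomy in Painlevé's example.**
The map `ψ(y) = y + Log y` (with `Log` the principal branch of the complex logarithm) is
a bijection from the slit plane `ℂ ∖ (−∞,0]` onto the complement of the two closed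
horizontal half-lines `{Im z = π, Re z ≤ −1}` and `{Im z = −π, Re z ≤ −1}`. -/
theorem psi_bijection :
    Set.BijOn (fun y : ℂ => y + Complex.log y) Complex.slitPlane
      (({z : ℂ | z.im = Real.pi ∧ z.re ≤ -1} ∪
        {z : ℂ | z.im = -Real.pi ∧ z.re ≤ -1})ᶜ) := by
  have hpi := Real.pi_pos
  change Set.BijOn psi _ _
  refine ⟨?_, fun y hy z hz h => psi_inj hy hz h, ?_⟩
  · intro y hy hmem
    rcases lt_trichotomy y.im 0 with h1 | h1 | h1
    · have hl := psi_lower h1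
      rcases hmem with ⟨h2, h3⟩ | ⟨h2, h3⟩
      · linarith
      · apply psi_upper_not (y := starRingEnd ℂ y) (by simpa using h1)
        rw [psi_conj hy, Complex.conj_im, Complex.conj_re, h2, neg_neg]
        exact ⟨rfl, h3⟩
    · have hl := (psi_real hy h1).2.1
      rcases hmem with ⟨h2, h3⟩ | ⟨h2, h3⟩ <;> linarith
    · have hl := (psi_upper h1).1
      rcases hmem with h2 | ⟨h2, h3⟩
      · exact psi_upper_not h1 h2
      · linarith
  · intro w hw
    rw [Set.mem_compl_iff, Set.mem_union, not_or] at hw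
    rcases lt_trichotomy w.im 0 with h1 | h1 | h1
    · obtain ⟨y, hy, hyw⟩ := psi_upper_surj (w := starRingEnd ℂ w) (by simpa using h1) (by
        rintro ⟨h2, h3⟩
        rw [Complex.conj_im] at h2
        rw [Complex.conj_re] at h3
        exact hw.2 ⟨by linarith, h3⟩)
      refine ⟨starRingEnd ℂ y, slit_of_lower (by simpa using hy), ?_⟩
      rw [psi_conj (slit_of_upper hy), hyw, Complex.conj_conj]
    · obtain ⟨x, hx, hxa⟩ := real_surj w.re
      have hs : (x : ℂ) ∈ Complex.slitPlane := Or.inl (by simpa using hx)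
      obtain ⟨-, q1, q2⟩ := psi_real hs (by simp)
      refine ⟨x, hs, Complex.ext ?_ (q1.trans h1.symm)⟩
      rw [q2, Complex.ofReal_re, hxa]
    · obtain ⟨y, hy, hyw⟩ := psi_upper_surj h1 hw.1
      exact ⟨y, slit_of_upper hy, hyw⟩
end
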